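/- arXiv:math/9411210 — 2 statements merged into one kernel-verified Lean document; each statement's English description precedes it below -/
import Mathlib

section
/- Let 1 ≤ p < ∞ with p ≠ 2, and let H be a separable real Hilbert space with dim H ≥ 2. Let T be a surjective linear isometry of the Bochner space L^p([0,1]; H) (with respect to Lebesgue measure λ). Then there exist: a measurable function a : [0,1] → ℝ that is nonvanishing almost everywhere; a measurable bijection σ : [0,1] → [0,1] with measurable inverse such that for every Borel set B ⊆ [0,1], λ(σ⁻¹(B)) = 0 if and only if λ(B) = 0; and a map S : [0,1] → B(H) such that t ↦ S(t)h is measurable for every h ∈ H and S(t) is a surjective linear isometry of H for almost every t; such that for every f ∈ L^p([0,1]; H) (with any choice of measurable representative, the composition being well defined up to null sets since σ⁻¹ preserves null sets), (T f)(t) = a(t) • S(t)(f(σ(t))) for almost every t ∈ [0,1]. -/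
open MeasureTheory
open scoped ENNReal

/-!
Raising the parallelogram law to the power `q / 2` shows that in a Hilbert space the Clarkson
defect `‖x + y‖ ^ q + ‖x - y‖ ^ q - 2 * (‖x‖ ^ q + ‖y‖ ^ q)` has, for `q ≠ 2`, a strict sign unless
`x = 0` or `y = 0`. Integrating it, one sees from norms alone whether two functions of `L^p` have
almost disjoint supports, so a surjective isometry `T` preserves disjointness and therefore acts on
measurable sets modulo null sets. In standard Borel spaces this action is induced by a point map
`σ`, and modifying it on uncountable null sets makes it bijective.

Comparing the norms of `T` applied to constants over all measurable sets shows that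
`‖(T h)(t)‖ = a(t) * ‖h‖` almost everywhere. By polarization `a(t)⁻¹ • (T ·)(t)` maps a Hilbert
basis to an orthonormal family for almost every `t`, and hence extends to an isometry `S(t)`. The
canonical form thus holds for constants, hence for simple functions, hence by density for all
functions. Since `T` is onto, the closed range of `S(t)` is dense for almost every `t`.
-/

section Clarkson

theorem add_rpow_lt_rpow_add {a b s : ℝ} (ha : 0 < a) (hb : 0 < b) (hs : 1 < s) :
    a ^ s + b ^ s < (a + b) ^ s := by
  have hab : 0 < a + b := add_pos ha hb
  have ha' : (a / (a + b)) ^ s < a / (a + b) :=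
    Real.rpow_lt_self_of_lt_one (by positivity) ((div_lt_one hab).2 (by linarith)) hs
  have hb' : (b / (a + b)) ^ s < b / (a + b) :=
    Real.rpow_lt_self_of_lt_one (by positivity) ((div_lt_one hab).2 (by linarith)) hs
  rw [Real.div_rpow ha.le hab.le] at ha'
  rw [Real.div_rpow hb.le hab.le] at hb'
  rw [← div_lt_one (Real.rpow_pos_of_pos hab s)]
  calc (a ^ s + b ^ s) / (a + b) ^ s
      = a ^ s / (a + b) ^ s + b ^ s / (a + b) ^ s := add_div ..
    _ < a / (a + b) + b / (a + b) := add_lt_add ha' hb'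
    _ = 1 := by field_simp

theorem rpow_add_lt_add_rpow {a b s : ℝ} (ha : 0 < a) (hb : 0 < b) (hs : s < 1) :
    (a + b) ^ s < a ^ s + b ^ s := by
  have hab : 0 < a + b := add_pos ha hb
  have ha' : a / (a + b) < (a / (a + b)) ^ s :=
    Real.self_lt_rpow_of_lt_one (by positivity) ((div_lt_one hab).2 (by linarith)) hs
  have hb' : b / (a + b) < (b / (a + b)) ^ s :=
    Real.self_lt_rpow_of_lt_one (by positivity) ((div_lt_one hab).2 (by linarith)) hs
  rw [Real.div_rpow ha.le hab.le] at ha'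
  rw [Real.div_rpow hb.le hab.le] at hb'
  rw [← one_lt_div (Real.rpow_pos_of_pos hab s)]
  calc 1 = a / (a + b) + b / (a + b) := by field_simp
    _ < a ^ s / (a + b) ^ s + b ^ s / (a + b) ^ s := add_lt_add ha' hb'
    _ = (a ^ s + b ^ s) / (a + b) ^ s := (add_div ..).symm

/-- The defect in Clarkson's inequality with exponent `q`. Since only a norm is asked for, it makes
sense both for vectors and for elements of an `Lp` space. -/
noncomputable def clarksonDefect {E : Type*} [AddGroup E] [Norm E] (q : ℝ) (x y : E) : ℝ :=
  ‖x + y‖ ^ q + ‖x - y‖ ^ q - 2 * (‖x‖ ^ q + ‖y‖ ^ q)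

theorem clarksonDefect_eq_zero_of_or {E : Type*} [NormedAddCommGroup E] {q : ℝ} (hq : q ≠ 0)
    {x y : E} (h : x = 0 ∨ y = 0) : clarksonDefect q x y = 0 := by
  rcases h with rfl | rfl <;> simp [clarksonDefect, Real.zero_rpow hq, two_mul]

variable (𝕜 : Type*) [RCLike 𝕜] {E : Type*} [NormedAddCommGroup E] [InnerProductSpace 𝕜 E]

include 𝕜 in
/-- Rewriting every `‖·‖ ^ q` as `(‖·‖ ^ 2) ^ (q / 2)`, the parallelogram law reduces this to
convexity and strict superadditivity of `t ↦ t ^ (q / 2)`, or the reverse when `q < 2`. -/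
theorem sub_two_mul_clarksonDefect_pos {q : ℝ} (hq : 0 < q) (hq2 : q ≠ 2) {x y : E} (hx : x ≠ 0)
    (hy : y ≠ 0) : 0 < (q - 2) * clarksonDefect q x y := by
  have rpow_eq (z : E) : ‖z‖ ^ q = (‖z‖ ^ 2) ^ (q / 2) := by
    rw [← Real.rpow_natCast_mul (norm_nonneg z)]
    congr 1
    push_cast
    ring
  have hx' : 0 < ‖x‖ ^ 2 := by positivity
  have hy' : 0 < ‖y‖ ^ 2 := by positivity
  have hmem (z : E) : ‖z‖ ^ 2 ∈ Set.Ici (0 : ℝ) := sq_nonneg ‖z‖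
  have midpoint_eq : (1 / 2 : ℝ) • ‖x + y‖ ^ 2 + (1 / 2 : ℝ) • ‖x - y‖ ^ 2 = ‖x‖ ^ 2 + ‖y‖ ^ 2 := by
    have := parallelogram_law_with_norm 𝕜 x y
    simp only [smul_eq_mul]
    linarith
  have half_nonneg : (0 : ℝ) ≤ 1 / 2 := by norm_num
  simp only [clarksonDefect, rpow_eq]
  rcases hq2.lt_or_gt with h | h
  · have hconc := (Real.concaveOn_rpow (p := q / 2) (by linarith) (by linarith)).2 (hmem (x + y))
      (hmem (x - y)) half_nonneg half_nonneg (by norm_num)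
    have hsub := rpow_add_lt_add_rpow hx' hy' (s := q / 2) (by linarith)
    rw [midpoint_eq, smul_eq_mul, smul_eq_mul] at hconc
    exact mul_pos_of_neg_of_neg (by linarith) (by linarith)
  · have hconv := (convexOn_rpow (p := q / 2) (by linarith)).2 (hmem (x + y)) (hmem (x - y))
      half_nonneg half_nonneg (by norm_num)
    have hsuper := add_rpow_lt_rpow_add hx' hy' (s := q / 2) (by linarith)
    rw [midpoint_eq, smul_eq_mul, smul_eq_mul] at hconv
    exact mul_pos (by linarith) (by linarith)

end Clarkson

section Disjointness

variable {X Y : Type*} [MeasurableSpace X] [MeasurableSpace Y] {μ : Measure X} {ν : Measure Y}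
  {p : ℝ≥0∞}

section Norm

variable {E : Type*} [NormedAddCommGroup E]

theorem Lp_norm_rpow_eq_integral (hp0 : p ≠ 0) (hptop : p ≠ ∞) (f : Lp E p μ) :
    ‖f‖ ^ p.toReal = ∫ x, ‖f x‖ ^ p.toReal ∂μ := by
  rw [Lp.norm_def, toReal_eLpNorm (Lp.aestronglyMeasurable f),
    lpNorm_eq_integral_norm_rpow_toReal hp0 hptop (Lp.aestronglyMeasurable f),
    Real.rpow_inv_rpow (integral_nonneg fun x ↦ by positivity)
      (ENNReal.toReal_ne_zero.2 ⟨hp0, hptop⟩)]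

theorem Lp_norm_rpow_eq_setIntegral (hp0 : p ≠ 0) (hptop : p ≠ ∞) {B : Set X}
    (hB : MeasurableSet B) {f g : Lp E p μ} (hg : g =ᵐ[μ] B.indicator f) :
    ‖g‖ ^ p.toReal = ∫ x in B, ‖f x‖ ^ p.toReal ∂μ := by
  rw [Lp_norm_rpow_eq_integral hp0 hptop, ← integral_indicator hB]
  refine integral_congr_ae ?_
  filter_upwards [hg] with x hx
  by_cases hxB : x ∈ B
  · simp only [hx, Set.indicator_of_mem hxB]
  · simp only [hx, Set.indicator_of_notMem hxB, norm_zero,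
      Real.zero_rpow (ENNReal.toReal_ne_zero.2 ⟨hp0, hptop⟩)]

theorem clarksonDefect_coeFn_ae_eq (q : ℝ) (f g : Lp E p μ) :
    (fun x ↦ clarksonDefect q (f x) (g x)) =ᵐ[μ] fun x ↦
      ‖(f + g) x‖ ^ q + ‖(f - g) x‖ ^ q - 2 * (‖f x‖ ^ q + ‖g x‖ ^ q) := by
  filter_upwards [Lp.coeFn_add f g, Lp.coeFn_sub f g] with x hadd hsub
  rw [hadd, hsub]
  rfl

theorem integrable_clarksonDefect (hp0 : p ≠ 0) (hptop : p ≠ ∞) (f g : Lp E p μ) :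
    Integrable (fun x ↦ clarksonDefect p.toReal (f x) (g x)) μ := by
  have integrable (f : Lp E p μ) := (Lp.memLp f).integrable_norm_rpow hp0 hptop
  exact (((integrable _).add (integrable _)).sub
    (((integrable _).add (integrable _)).const_mul 2)).congr
    (clarksonDefect_coeFn_ae_eq p.toReal f g).symm

theorem clarksonDefect_eq_integral (hp0 : p ≠ 0) (hptop : p ≠ ∞) (f g : Lp E p μ) :
    clarksonDefect p.toReal f g = ∫ x, clarksonDefect p.toReal (f x) (g x) ∂μ := by
  have integrable (f : Lp E p μ) := (Lp.memLp f).integrable_norm_rpow hp0 hptop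
  have integrable_add (f g : Lp E p μ) :
      Integrable (fun x ↦ ‖f x‖ ^ p.toReal + ‖g x‖ ^ p.toReal) μ :=
    (integrable f).add (integrable g)
  rw [integral_congr_ae (clarksonDefect_coeFn_ae_eq p.toReal f g),
    integral_sub (integrable_add _ _) ((integrable_add _ _).const_mul 2), integral_const_mul,
    integral_add (integrable _) (integrable _), integral_add (integrable _) (integrable _)]
  simp only [clarksonDefect, Lp_norm_rpow_eq_integral hp0 hptop]

end Norm

variable {𝕜 : Type*} [RCLike 𝕜] {H K : Type*} [NormedAddCommGroup H] [InnerProductSpace 𝕜 H]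
  [NormedAddCommGroup K] [InnerProductSpace 𝕜 K]

variable (𝕜) in
include 𝕜 in
theorem clarksonDefect_eq_zero_iff (hp0 : p ≠ 0) (hptop : p ≠ ∞) (hp2 : p ≠ 2) (f g : Lp H p μ) :
    clarksonDefect p.toReal f g = 0 ↔ ∀ᵐ x ∂μ, f x = 0 ∨ g x = 0 := by
  have hq : 0 < p.toReal := ENNReal.toReal_pos hp0 hptop
  have hq2 : p.toReal ≠ 2 := fun h ↦ hp2 ((ENNReal.toReal_eq_toReal_iff' hptop (by simp)).1 h)
  have hnonneg (x : X) : 0 ≤ (p.toReal - 2) * clarksonDefect p.toReal (f x) (g x) := by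
    by_cases h : f x = 0 ∨ g x = 0
    · rw [clarksonDefect_eq_zero_of_or hq.ne' h, mul_zero]
    · rw [not_or] at h
      exact (sub_two_mul_clarksonDefect_pos 𝕜 hq hq2 h.1 h.2).le
  have heq (x : X) :
      (p.toReal - 2) * clarksonDefect p.toReal (f x) (g x) = 0 ↔ f x = 0 ∨ g x = 0 := by
    refine ⟨fun h ↦ ?_, fun h ↦ by rw [clarksonDefect_eq_zero_of_or hq.ne' h, mul_zero]⟩
    by_contra! hne
    exact (sub_two_mul_clarksonDefect_pos 𝕜 hq hq2 hne.1 hne.2).ne' h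
  rw [← mul_eq_zero_iff_left (sub_ne_zero.2 hq2), clarksonDefect_eq_integral hp0 hptop,
    ← integral_const_mul, integral_eq_zero_iff_of_nonneg hnonneg
      ((integrable_clarksonDefect hp0 hptop f g).const_mul _)]
  exact Filter.eventually_congr (.of_forall heq)

theorem ae_map_eq_zero_or_iff [Fact (1 ≤ p)] (hptop : p ≠ ∞) (hp2 : p ≠ 2)
    (T : Lp H p μ →ₗᵢ[𝕜] Lp K p ν) (f g : Lp H p μ) :
    (∀ᵐ y ∂ν, T f y = 0 ∨ T g y = 0) ↔ ∀ᵐ x ∂μ, f x = 0 ∨ g x = 0 := by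
  have hp0 : p ≠ 0 := (zero_lt_one.trans_le (Fact.out : 1 ≤ p)).ne'
  rw [← clarksonDefect_eq_zero_iff 𝕜 hp0 hptop hp2, ← clarksonDefect_eq_zero_iff 𝕜 hp0 hptop hp2]
  simp only [clarksonDefect, ← map_add, ← map_sub, T.norm_map]

end Disjointness

section Correspondence

variable {X Y : Type*} [MeasurableSpace X] [MeasurableSpace Y] {μ : Measure X} {ν : Measure Y}
  {p : ℝ≥0∞}

section VanishesOn

variable {E : Type*} [NormedAddCommGroup E]

/-- The function `f` vanishes almost everywhere on `B`, which need not be measurable. -/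
def VanishesOn (f : Lp E p μ) (B : Set X) : Prop := ∀ᵐ x ∂μ, x ∈ B → f x = 0

theorem vanishesOn_empty (f : Lp E p μ) : VanishesOn f ∅ := by simp [VanishesOn]

theorem vanishesOn_iUnion {ι : Type*} [Countable ι] {f : Lp E p μ} {B : ι → Set X} :
    VanishesOn f (⋃ i, B i) ↔ ∀ i, VanishesOn f (B i) := by
  simp only [VanishesOn, Set.mem_iUnion, forall_exists_index, ← ae_all_iff]

theorem vanishesOn_congr_set {f : Lp E p μ} {B B' : Set X} (h : B =ᵐ[μ] B') :
    VanishesOn f B ↔ VanishesOn f B' := by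
  refine Filter.eventually_congr ?_
  filter_upwards [h.mem_iff] with x hx
  rw [hx]

variable [IsFiniteMeasure μ] {B : Set X}

theorem vanishesOn_indicatorConstLp_compl (hB : MeasurableSet B) (e : E) :
    VanishesOn (indicatorConstLp p hB.compl (measure_ne_top μ Bᶜ) e) B := by
  filter_upwards [indicatorConstLp_coeFn (p := p) (hs := hB.compl) (hμs := measure_ne_top μ Bᶜ)
    (c := e)] with x hx hxB
  rw [hx, Set.indicator_of_notMem (not_not_intro hxB)]

theorem vanishesOn_iff_ae_eq_zero_or (hB : MeasurableSet B) {e : E} (he : e ≠ 0)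
    (f : Lp E p μ) :
    VanishesOn f B ↔
      ∀ᵐ x ∂μ, f x = 0 ∨ indicatorConstLp p hB (measure_ne_top μ B) e x = 0 := by
  refine Filter.eventually_congr ?_
  filter_upwards [indicatorConstLp_coeFn (p := p) (hs := hB) (hμs := measure_ne_top μ B) (c := e)]
    with x hx
  rw [hx, Set.indicator_apply_eq_zero]
  tauto

variable [Nontrivial E]

theorem vanishesOn_compl_iff (hB : MeasurableSet B) (f : Lp E p μ) :
    VanishesOn f Bᶜ ↔ ∀ g : Lp E p μ, VanishesOn g B → ∀ᵐ x ∂μ, f x = 0 ∨ g x = 0 := by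
  constructor
  · intro hf g hg
    filter_upwards [hf, hg] with x hfx hgx
    exact (em (x ∈ B)).symm.imp hfx hgx
  · obtain ⟨e, he⟩ := exists_ne (0 : E)
    intro h
    exact (vanishesOn_iff_ae_eq_zero_or hB.compl he f).2
      (h _ (vanishesOn_indicatorConstLp_compl hB e))

theorem ae_le_iff_forall_vanishesOn {B' : Set X} (hB' : MeasurableSet B') :
    B ≤ᵐ[μ] B' ↔ ∀ f : Lp E p μ, VanishesOn f B' → VanishesOn f B := by
  constructor
  · intro h f hf
    filter_upwards [h, hf] with x hx hfx hxB using hfx (hx hxB)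
  · obtain ⟨e, he⟩ := exists_ne (0 : E)
    intro h
    have hvanishes := h _ (vanishesOn_indicatorConstLp_compl hB' e)
    filter_upwards [hvanishes, indicatorConstLp_coeFn (p := p) (hs := hB'.compl)
      (hμs := measure_ne_top μ B'ᶜ) (c := e)] with x hx hcoe hxB
    by_contra hxB'
    exact he (by rw [← hx hxB, hcoe, Set.indicator_of_mem hxB'])

end VanishesOn

variable [Fact (1 ≤ p)] {𝕜 : Type*} {H K : Type*} [NormedAddCommGroup H] [NormedAddCommGroup K]

section NormedSpace

variable [NormedField 𝕜] [NormedSpace 𝕜 H] [NormedSpace 𝕜 K] {T : Lp H p μ ≃ₗᵢ[𝕜] Lp K p ν}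
  {B B' : Set X} {E E' : Set Y}

/-- The isometry `T` maps the functions vanishing on `B` onto those vanishing on `E`: this is the
action of `T` on sets, as a relation so that no choice modulo null sets is needed. -/
def Corresponds (T : Lp H p μ ≃ₗᵢ[𝕜] Lp K p ν) (B : Set X) (E : Set Y) : Prop :=
  ∀ f, VanishesOn f B ↔ VanishesOn (T f) E

theorem Corresponds.symm (h : Corresponds T B E) : Corresponds T.symm E B := fun f ↦ by
  simpa using (h (T.symm f)).symm

theorem Corresponds.empty : Corresponds T ∅ ∅ := fun f ↦
  iff_of_true (vanishesOn_empty f) (vanishesOn_empty (T f))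

theorem Corresponds.iUnion {ι : Type*} [Countable ι] {B : ι → Set X} {E : ι → Set Y}
    (h : ∀ i, Corresponds T (B i) (E i)) : Corresponds T (⋃ i, B i) (⋃ i, E i) := fun f ↦ by
  rw [vanishesOn_iUnion, vanishesOn_iUnion]
  exact forall_congr' fun i ↦ h i f

theorem Corresponds.congr_right (h : Corresponds T B E) (hE : E =ᵐ[ν] E') : Corresponds T B E' :=
  fun f ↦ (h f).trans (vanishesOn_congr_set hE)

variable [IsFiniteMeasure μ] [IsFiniteMeasure ν] [Nontrivial H] [Nontrivial K]

theorem Corresponds.ae_le_iff (h : Corresponds T B E) (h' : Corresponds T B' E')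
    (hB' : MeasurableSet B') (hE' : MeasurableSet E') : B ≤ᵐ[μ] B' ↔ E ≤ᵐ[ν] E' := by
  rw [ae_le_iff_forall_vanishesOn (E := H) (p := p) hB',
    ae_le_iff_forall_vanishesOn (E := K) (p := p) hE']
  exact T.toEquiv.forall_congr fun {f} ↦ imp_congr (h' f) (h f)

theorem Corresponds.measure_eq_zero_iff (h : Corresponds T B E) : ν E = 0 ↔ μ B = 0 := by
  simpa [ae_le_set] using (h.ae_le_iff .empty .empty .empty).symm

theorem Corresponds.left_ae_unique (h : Corresponds T B E) (h' : Corresponds T B' E)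
    (hB : MeasurableSet B) (hB' : MeasurableSet B') (hE : MeasurableSet E) : B =ᵐ[μ] B' :=
  ((h.ae_le_iff h' hB' hE).2 .rfl).antisymm ((h'.ae_le_iff h hB hE).2 .rfl)

theorem quasiMeasurePreserving_of_corresponds_preimage {σ : Y → X} (hσ : Measurable σ)
    (h : ∀ B, MeasurableSet B → Corresponds T B (σ ⁻¹' B)) :
    Measure.QuasiMeasurePreserving σ ν μ :=
  ⟨hσ, .mk fun B hB hμB ↦ by rw [Measure.map_apply hσ hB, (h B hB).measure_eq_zero_iff, hμB]⟩

end NormedSpace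

variable [RCLike 𝕜] [InnerProductSpace 𝕜 H] [InnerProductSpace 𝕜 K]
  {T : Lp H p μ ≃ₗᵢ[𝕜] Lp K p ν} {B : Set X} {E : Set Y} [IsFiniteMeasure μ] [Nontrivial H]

theorem exists_corresponds (hptop : p ≠ ∞) (hp2 : p ≠ 2) (T : Lp H p μ ≃ₗᵢ[𝕜] Lp K p ν)
    (hB : MeasurableSet B) : ∃ E, MeasurableSet E ∧ Corresponds T B E := by
  obtain ⟨e, he⟩ := exists_ne (0 : H)
  let g : Lp H p μ := indicatorConstLp p hB (measure_ne_top μ B) e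
  refine ⟨Function.support (T g), (Lp.stronglyMeasurable (T g)).measurableSet_support, fun f ↦ ?_⟩
  rw [vanishesOn_iff_ae_eq_zero_or hB he,
    ← ae_map_eq_zero_or_iff hptop hp2 T.toLinearIsometry f g]
  refine Filter.eventually_congr (.of_forall fun y ↦ ?_)
  rw [Function.mem_support, or_comm, or_iff_not_imp_left]
  rfl

variable [IsFiniteMeasure ν] [Nontrivial K]

theorem Corresponds.compl (hptop : p ≠ ∞) (hp2 : p ≠ 2) (h : Corresponds T B E)
    (hB : MeasurableSet B) (hE : MeasurableSet E) : Corresponds T Bᶜ Eᶜ := fun f ↦ by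
  rw [vanishesOn_compl_iff hB, vanishesOn_compl_iff hE]
  exact T.toEquiv.forall_congr fun {g} ↦ imp_congr (h g)
    (ae_map_eq_zero_or_iff hptop hp2 T.toLinearIsometry f g).symm

theorem Corresponds.map_indicator (hptop : p ≠ ∞) (hp2 : p ≠ 2) (h : Corresponds T B E)
    (hB : MeasurableSet B) (hE : MeasurableSet E) {f g : Lp H p μ} (hg : g =ᵐ[μ] B.indicator f) :
    T g =ᵐ[ν] E.indicator (T f) := by
  have g_vanishes : VanishesOn g Bᶜ := by
    filter_upwards [hg] with x hx hxB
    rw [hx, Set.indicator_of_notMem hxB]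
  have sub_vanishes : VanishesOn (f - g) B := by
    filter_upwards [hg, Lp.coeFn_sub f g] with x hx hsub hxB
    rw [hsub, Pi.sub_apply, hx, Set.indicator_of_mem hxB, sub_self]
  have map_sub_vanishes : VanishesOn (T f - T g) E := map_sub T f g ▸ (h _).1 sub_vanishes
  filter_upwards [(h.compl hptop hp2 hB hE g).1 g_vanishes, map_sub_vanishes,
    Lp.coeFn_sub (T f) (T g)] with y hcompl hE hsub
  by_cases hy : y ∈ E
  · rw [Set.indicator_of_mem hy, ← sub_eq_zero.1 (hsub.symm.trans (hE hy))]
  · rw [Set.indicator_of_notMem hy, hcompl hy]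

theorem Corresponds.setIntegral_norm_rpow (hptop : p ≠ ∞) (hp2 : p ≠ 2) (h : Corresponds T B E)
    (hB : MeasurableSet B) (hE : MeasurableSet E) (f : Lp H p μ) :
    ∫ y in E, ‖T f y‖ ^ p.toReal ∂ν = ∫ x in B, ‖f x‖ ^ p.toReal ∂μ := by
  have hp0 : p ≠ 0 := (zero_lt_one.trans_le (Fact.out : 1 ≤ p)).ne'
  let g : Lp H p μ := ((Lp.memLp f).indicator hB).toLp
  have hg : g =ᵐ[μ] B.indicator f := MemLp.coeFn_toLp _
  rw [← Lp_norm_rpow_eq_setIntegral hp0 hptop hE (h.map_indicator hptop hp2 hB hE hg),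
    ← Lp_norm_rpow_eq_setIntegral hp0 hptop hB hg, T.norm_map]

end Correspondence

section PointRealization

variable {X Y : Type*} [MeasurableSpace X] [MeasurableSpace Y] [StandardBorelSpace X]

theorem measurableSet_bool_pi_induction {ι : Type*} {P : Set (ι → Bool) → Prop} (empty : P ∅)
    (compl : ∀ C, MeasurableSet C → P C → P Cᶜ)
    (iUnion : ∀ C : ℕ → Set (ι → Bool), (∀ n, P (C n)) → P (⋃ n, C n))
    (coord : ∀ i, P {c | c i = true}) {C : Set (ι → Bool)} (hC : MeasurableSet C) : P C := by
  let m : MeasurableSpace (ι → Bool) :=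
    { MeasurableSet' C := MeasurableSet C ∧ P C
      measurableSet_empty := ⟨.empty, empty⟩
      measurableSet_compl C h := ⟨h.1.compl, compl C h.1 h.2⟩
      measurableSet_iUnion C h := ⟨.iUnion fun n ↦ (h n).1, iUnion C fun n ↦ (h n).2⟩ }
  have coord_measurable (i : ι) : Measurable[m] fun c : ι → Bool ↦ c i :=
    measurable_to_bool ⟨measurable_pi_apply i (measurableSet_singleton true), coord i⟩
  have pi_le : MeasurableSpace.pi ≤ m := iSup_le fun i ↦ (coord_measurable i).comap_le
  exact (pi_le C hC).2

/-- It suffices to realize `R` on the generators of the Cantor space, into which `X` embeds. -/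
theorem exists_measurable_forall_preimage [Nonempty X] {R : Set X → Set Y → Prop}
    (empty : R ∅ ∅)
    (compl : ∀ B E, MeasurableSet B → MeasurableSet E → R B E → R Bᶜ Eᶜ)
    (iUnion : ∀ (B : ℕ → Set X) (E : ℕ → Set Y), (∀ n, R (B n) (E n)) → R (⋃ n, B n) (⋃ n, E n))
    (exists_right : ∀ B, MeasurableSet B → ∃ E, MeasurableSet E ∧ R B E) :
    ∃ σ : Y → X, Measurable σ ∧ ∀ B, MeasurableSet B → R B (σ ⁻¹' B) := by
  obtain ⟨ι, hι, ι_injective⟩ :=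
    MeasurableSpace.measurable_injection_nat_bool_of_countablySeparated X
  have ι_embedding : MeasurableEmbedding ι := hι.measurableEmbedding ι_injective
  choose E hE hR using fun n ↦
    exists_right {x | ι x n = true} (measurable_pi_iff.1 hι n (measurableSet_singleton true))
  classical
  let φ : Y → ℕ → Bool := fun y n ↦ decide (y ∈ E n)
  have coord_preimage (n : ℕ) : (fun y ↦ φ y n) ⁻¹' {true} = E n := by ext y; simp [φ]
  have hφ : Measurable φ := measurable_pi_iff.2 fun n ↦
    measurable_to_bool (by rw [coord_preimage]; exact hE n)
  have forall_R (C : Set (ℕ → Bool)) (hC : MeasurableSet C) : R (ι ⁻¹' C) (φ ⁻¹' C) := by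
    refine measurableSet_bool_pi_induction (P := fun C ↦ R (ι ⁻¹' C) (φ ⁻¹' C)) empty
      (fun C hC ↦ compl _ _ (hι hC) (hφ hC)) (fun C h ↦ ?_) (fun n ↦ ?_) hC
    · simpa only [Set.preimage_iUnion] using iUnion _ _ h
    · change R {x | ι x n = true} ((fun y ↦ φ y n) ⁻¹' {true})
      rw [coord_preimage]
      exact hR n
  refine ⟨ι_embedding.invFun ∘ φ, ι_embedding.measurable_invFun.comp hφ, fun B hB ↦ ?_⟩
  have h := forall_R _ (ι_embedding.measurable_invFun hB)
  rwa [← Set.preimage_comp, ι_embedding.leftInverse_invFun.comp_eq_id] at h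

end PointRealization

section MeasurableEquiv

variable {X Y : Type*} [MeasurableSpace X] [StandardBorelSpace X]
  [MeasurableSpace Y] [StandardBorelSpace Y]

theorem exists_measurableSet_null_not_countable [Uncountable X] (μ : Measure X) [SFinite μ] :
    ∃ s, MeasurableSet s ∧ μ s = 0 ∧ ¬s.Countable := by
  let e : X ≃ᵐ ℝ × ℝ := PolishSpace.measurableEquivOfNotCountable
    (not_countable_iff.2 inferInstance) (not_countable_iff.2 inferInstance)
  have hg : Measurable fun x ↦ (e x).1 := measurable_fst.comp e.measurable
  obtain ⟨r, hr⟩ : ∃ r, r ∉ {r | 0 < μ {x | (e x).1 = r}} := by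
    by_contra! h
    exact Set.not_countable_univ
      ((Measure.countable_meas_level_set_pos hg).mono fun r _ ↦ h r)
  refine ⟨{x | (e x).1 = r}, hg (measurableSet_singleton r), by simpa using hr, fun h ↦ ?_⟩
  have : (Set.univ : Set ℝ) ⊆ (fun x ↦ (e x).2) '' {x | (e x).1 = r} := fun t _ ↦
    ⟨e.symm (r, t), by simp⟩
  exact Set.not_countable_univ ((h.image _).mono this)

theorem exists_measurableEquiv_extension {t : Set Y} (ht : MeasurableSet t)
    {f : t → X} (hf : MeasurableEmbedding f) (htc : ¬tᶜ.Countable)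
    (hfc : ¬(Set.range f)ᶜ.Countable) : ∃ ρ : Y ≃ᵐ X, ∀ y : t, ρ y = f y := by
  classical
  have : StandardBorelSpace ↥(tᶜ) := ht.compl.standardBorel
  have : StandardBorelSpace ↥(Set.range f)ᶜ := hf.measurableSet_range.compl.standardBorel
  let e : ↥(tᶜ) ≃ᵐ ↥(Set.range f)ᶜ := PolishSpace.measurableEquivOfNotCountable htc hfc
  refine ⟨(MeasurableEquiv.sumCompl ht).symm.trans
    ((hf.equivRange.sumCongr e).trans (MeasurableEquiv.sumCompl hf.measurableSet_range)),
    fun y ↦ ?_⟩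
  have inl_eq : (MeasurableEquiv.sumCompl ht).symm y = Sum.inl y :=
    (MeasurableEquiv.symm_apply_eq _).2 rfl
  rw [MeasurableEquiv.trans_apply, inl_eq]
  exact congrArg Subtype.val (hf.equivRange_apply y)

theorem exists_measurableEquiv_ae_eq [Uncountable X] [Uncountable Y] {μ : Measure X} [SFinite μ]
    {ν : Measure Y} [SFinite ν] {σ : Y → X} (hσ : Measure.QuasiMeasurePreserving σ ν μ) {s : Set Y}
    (hs : MeasurableSet s) (hs_conull : ∀ᵐ y ∂ν, y ∈ s) (hinj : Set.InjOn σ s) :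
    ∃ ρ : Y ≃ᵐ X, ρ =ᵐ[ν] σ := by
  obtain ⟨C, hC, hC_null, hC_uncountable⟩ := exists_measurableSet_null_not_countable μ
  obtain ⟨D, hD, hD_null, hD_uncountable⟩ := exists_measurableSet_null_not_countable ν
  let t : Set Y := s ∩ (D ∪ σ ⁻¹' C)ᶜ
  have ht : MeasurableSet t := hs.inter (hD.union (hσ.measurable hC)).compl
  have : StandardBorelSpace t := ht.standardBorel
  have hf : MeasurableEmbedding fun y : t ↦ σ y :=
    (hσ.measurable.comp measurable_subtype_coe).measurableEmbedding
      fun y z h ↦ Subtype.ext (hinj y.2.1 z.2.1 h)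
  have D_subset : D ⊆ tᶜ := fun y hy hyt ↦ hyt.2 (.inl hy)
  have C_subset : C ⊆ (Set.range fun y : t ↦ σ y)ᶜ := by
    rintro _ hx ⟨y, rfl⟩
    exact y.2.2 (.inr hx)
  obtain ⟨ρ, hρ⟩ := exists_measurableEquiv_extension ht hf
    (fun h ↦ hD_uncountable (h.mono D_subset)) (fun h ↦ hC_uncountable (h.mono C_subset))
  refine ⟨ρ, ?_⟩
  filter_upwards [hs_conull, measure_eq_zero_iff_ae_notMem.1 hD_null,
    measure_eq_zero_iff_ae_notMem.1 (hσ.preimage_null hC_null)] with y hys hyD hyC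
  exact hρ ⟨y, hys, not_or_intro hyD hyC⟩

end MeasurableEquiv

section SetRealization

variable {𝕜 : Type*} [RCLike 𝕜] {X Y : Type*} [MeasurableSpace X] [StandardBorelSpace X]
  [MeasurableSpace Y] {μ : Measure X} [IsFiniteMeasure μ] {ν : Measure Y} [IsFiniteMeasure ν]
  {p : ℝ≥0∞} [Fact (1 ≤ p)] {H K : Type*} [NormedAddCommGroup H] [InnerProductSpace 𝕜 H]
  [Nontrivial H] [NormedAddCommGroup K] [InnerProductSpace 𝕜 K] [Nontrivial K]

theorem exists_measurable_corresponds_preimage [Nonempty X] (hptop : p ≠ ∞) (hp2 : p ≠ 2)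
    (T : Lp H p μ ≃ₗᵢ[𝕜] Lp K p ν) :
    ∃ σ : Y → X, Measurable σ ∧ ∀ B, MeasurableSet B → Corresponds T B (σ ⁻¹' B) :=
  exists_measurable_forall_preimage .empty (fun _ _ hB hE h ↦ h.compl hptop hp2 hB hE)
    (fun _ _ h ↦ .iUnion h) (fun _ hB ↦ exists_corresponds hptop hp2 T hB)

theorem comp_ae_eq_id_of_corresponds {T : Lp H p μ ≃ₗᵢ[𝕜] Lp K p ν} {σ : Y → X} {τ : X → Y}
    (hσ : Measurable σ) (hτ : Measurable τ)
    (hT : ∀ B, MeasurableSet B → Corresponds T B (σ ⁻¹' B))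
    (hT' : ∀ E, MeasurableSet E → Corresponds T.symm E (τ ⁻¹' E)) : σ ∘ τ =ᵐ[μ] id := by
  refine Filter.EventuallyEq.of_forall_separating_mem_iff MeasurableSet fun B hB ↦ ?_
  have hστB : Corresponds T (τ ⁻¹' (σ ⁻¹' B)) (σ ⁻¹' B) := (hT' _ (hσ hB)).symm
  exact (hστB.left_ae_unique (hT B hB) (hτ (hσ hB)) hB (hσ hB)).mem_iff

theorem exists_measurableEquiv_corresponds_preimage [StandardBorelSpace Y] [Uncountable X]
    [Uncountable Y] (hptop : p ≠ ∞) (hp2 : p ≠ 2) (T : Lp H p μ ≃ₗᵢ[𝕜] Lp K p ν) :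
    ∃ σ : Y ≃ᵐ X, ∀ B, MeasurableSet B → Corresponds T B (σ ⁻¹' B) := by
  obtain ⟨σ, hσ, hTσ⟩ := exists_measurable_corresponds_preimage hptop hp2 T
  obtain ⟨τ, hτ, hTτ⟩ := exists_measurable_corresponds_preimage hptop hp2 T.symm
  have τσ_ae_eq : τ ∘ σ =ᵐ[ν] id := comp_ae_eq_id_of_corresponds hτ hσ hTτ hTσ
  obtain ⟨ρ, hρ⟩ := exists_measurableEquiv_ae_eq
    (quasiMeasurePreserving_of_corresponds_preimage hσ hTσ)
    (measurableSet_eq_fun (hτ.comp hσ) measurable_id) τσ_ae_eq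
    fun y hy z hz h ↦ (hy.symm.trans (congrArg τ h)).trans hz
  exact ⟨ρ, fun B hB ↦ (hTσ B hB).congr_right (hρ.symm.preimage B)⟩

end SetRealization

section OrthonormalFields

variable {𝕜 : Type*} [RCLike 𝕜] {ι : Type*} {H K : Type*} [NormedAddCommGroup H]
  [InnerProductSpace 𝕜 H] [NormedAddCommGroup K] [InnerProductSpace 𝕜 K]

theorem countable_of_orthonormal [TopologicalSpace.SeparableSpace H] {v : ι → H}
    (hv : Orthonormal 𝕜 v) : Countable ι := by
  have one_lt_dist : ∀ i j, i ≠ j → 1 < dist (v i) (v j) := fun i j hij ↦ by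
    have sq_eq : ‖v i - v j‖ ^ 2 = 2 := by
      rw [norm_sub_sq (𝕜 := 𝕜), hv.norm_eq_one, hv.norm_eq_one, hv.inner_eq_zero hij, map_zero]
      norm_num
    rw [dist_eq_norm, ← abs_norm, ← one_lt_sq_iff_one_lt_abs, sq_eq]
    exact one_lt_two
  have balls_disjoint : Set.univ.PairwiseDisjoint fun i ↦ Metric.ball (v i) (1 / 2) :=
    fun i _ j _ hij ↦ Metric.ball_disjoint_ball (by linarith [one_lt_dist i j hij])
  exact Set.countable_univ_iff.1 (balls_disjoint.countable_of_isOpen (fun _ _ ↦ Metric.isOpen_ball)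
    fun i _ ↦ ⟨v i, Metric.mem_ball_self one_half_pos⟩)

section Isometry

variable [CompleteSpace K] (b : HilbertBasis ι 𝕜 H) {v : ι → K} (hv : Orthonormal 𝕜 v)

/-- The linear isometry mapping the Hilbert basis `b` to the orthonormal family `v`. -/
noncomputable def isometryOfOrthonormal : H →ₗᵢ[𝕜] K :=
  hv.orthogonalFamily.linearIsometry.comp b.repr.toLinearIsometry

theorem hasSum_isometryOfOrthonormal (h : H) :
    HasSum (fun i ↦ b.repr h i • v i) (isometryOfOrthonormal b hv h) :=
  hv.orthogonalFamily.hasSum_linearIsometry (b.repr h)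

theorem isometryOfOrthonormal_apply_basis (i : ι) : isometryOfOrthonormal b hv (b i) = v i := by
  classical
  change hv.orthogonalFamily.linearIsometry (b.repr (b i)) = v i
  rw [b.repr_self, OrthogonalFamily.linearIsometry_apply_single,
    LinearIsometry.toSpanSingleton_apply, one_smul]

end Isometry

variable {Y : Type*} [MeasurableSpace Y]

theorem measurableSet_orthonormal [Countable ι] {v : Y → ι → K}
    (hv : ∀ i, StronglyMeasurable fun y ↦ v y i) : MeasurableSet {y | Orthonormal 𝕜 (v y)} := by
  classical
  simp only [orthonormal_iff_ite, Set.ofPred_forall]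
  exact .iInter fun i ↦ .iInter fun j ↦
    ((hv i).inner (hv j)).measurableSet_eq_fun stronglyMeasurable_const

theorem exists_isometry_field_of_ae_orthonormal [CompleteSpace K] [Countable ι] {ν : Measure Y}
    (b : HilbertBasis ι 𝕜 H) {v : Y → ι → K} (hv : ∀ i, StronglyMeasurable fun y ↦ v y i)
    (hv' : ∀ᵐ y ∂ν, Orthonormal 𝕜 (v y)) :
    ∃ S : Y → H →L[𝕜] K, (∀ h, StronglyMeasurable fun y ↦ S y h) ∧
      (∀ᵐ y ∂ν, ∀ h, ‖S y h‖ = ‖h‖) ∧ ∀ᵐ y ∂ν, ∀ i, S y (b i) = v y i := by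
  classical
  let G : Set Y := {y | Orthonormal 𝕜 (v y)}
  let S (y : Y) : H →L[𝕜] K :=
    if hy : y ∈ G then (isometryOfOrthonormal b hy).toContinuousLinearMap else 0
  have S_of_mem {y : Y} (hy : y ∈ G) (h : H) : S y h = isometryOfOrthonormal b hy h := by
    simp only [S, dif_pos hy, LinearIsometry.coe_toContinuousLinearMap]
  have S_of_notMem {y : Y} (hy : y ∉ G) (h : H) : S y h = 0 := by
    simp only [S, dif_neg hy, zero_apply]
  refine ⟨S, fun h ↦ ?_, ?_, ?_⟩
  · refine stronglyMeasurable_of_tendsto Filter.atTop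
      (f := fun s : Finset ι ↦ G.indicator fun y ↦ ∑ i ∈ s, b.repr h i • v y i)
      (fun s ↦ ?_) (tendsto_pi_nhds.2 fun y ↦ ?_)
    · exact (Finset.stronglyMeasurable_fun_sum s fun i _ ↦ (hv i).const_smul _).indicator
        (measurableSet_orthonormal hv)
    · by_cases hy : y ∈ G
      · simp only [S_of_mem hy, Set.indicator_of_mem hy]
        exact hasSum_isometryOfOrthonormal b hy h
      · simp only [S_of_notMem hy, Set.indicator_of_notMem hy, tendsto_const_nhds]
  · filter_upwards [hv'] with y hy h
    rw [S_of_mem hy, LinearIsometry.norm_map]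
  · filter_upwards [hv'] with y hy i
    rw [S_of_mem hy, isometryOfOrthonormal_apply_basis]

variable {ν : Measure Y} {p : ℝ≥0∞} {U : H →ₗ[𝕜] Lp K p ν} {a : Y → ℝ}

theorem ae_inner_eq_sq_mul_inner (hU : ∀ h, ∀ᵐ y ∂ν, ‖U h y‖ = a y * ‖h‖) (h k : H) :
    ∀ᵐ y ∂ν, inner 𝕜 (U h y) (U k y) = (a y : 𝕜) ^ 2 * inner 𝕜 h k := by
  have norm_add_smul (c : 𝕜) : ∀ᵐ y ∂ν, ‖U h y + c • U k y‖ = a y * ‖h + c • k‖ := by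
    filter_upwards [hU (h + c • k), Lp.coeFn_add (U h) (c • U k), Lp.coeFn_smul c (U k)]
      with y hy hadd hsmul
    rw [← hy, map_add, map_smul, hadd, Pi.add_apply, hsmul, Pi.smul_apply]
  filter_upwards [norm_add_smul 1, norm_add_smul (-1), norm_add_smul RCLike.I,
    norm_add_smul (-RCLike.I)] with y h1 h2 h3 h4
  simp only [one_smul, neg_smul, ← sub_eq_add_neg] at h1 h2 h3 h4
  rw [inner_eq_sum_norm_sq_div_four, inner_eq_sum_norm_sq_div_four, h1, h2, h3, h4]
  push_cast
  ring

theorem ae_orthonormal_inv_smul [Countable ι] {b : ι → H} (hb : Orthonormal 𝕜 b)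
    (ha : ∀ᵐ y ∂ν, a y ≠ 0) (hU : ∀ h, ∀ᵐ y ∂ν, ‖U h y‖ = a y * ‖h‖) :
    ∀ᵐ y ∂ν, Orthonormal 𝕜 fun i ↦ (a y : 𝕜)⁻¹ • U (b i) y := by
  classical
  filter_upwards [ha, ae_all_iff.2 fun i ↦ ae_all_iff.2 fun j ↦
    ae_inner_eq_sq_mul_inner hU (b i) (b j)] with y hay hinner
  have hay' : (a y : 𝕜) ≠ 0 := RCLike.ofReal_ne_zero.2 hay
  refine orthonormal_iff_ite.2 fun i j ↦ ?_
  rw [inner_smul_left, inner_smul_right, hinner, map_inv₀, RCLike.conj_ofReal,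
    ← orthonormal_iff_ite.1 hb]
  field_simp

theorem exists_isometry_field_of_ae_norm_eq [CompleteSpace K] [Countable ι]
    (b : HilbertBasis ι 𝕜 H) (ham : StronglyMeasurable a) (ha : ∀ᵐ y ∂ν, a y ≠ 0)
    (hU : ∀ h, ∀ᵐ y ∂ν, ‖U h y‖ = a y * ‖h‖) :
    ∃ S : Y → H →L[𝕜] K, (∀ h, StronglyMeasurable fun y ↦ S y h) ∧
      (∀ᵐ y ∂ν, ∀ h, ‖S y h‖ = ‖h‖) ∧ ∀ᵐ y ∂ν, ∀ i, U (b i) y = (a y : 𝕜) • S y (b i) := by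
  obtain ⟨S, hSm, hS, hSb⟩ := exists_isometry_field_of_ae_orthonormal b
    (v := fun y i ↦ (a y : 𝕜)⁻¹ • U (b i) y)
    (fun i ↦ (RCLike.continuous_ofReal.comp_stronglyMeasurable ham).inv₀.smul
      (Lp.stronglyMeasurable (U (b i))))
    (ae_orthonormal_inv_smul b.orthonormal ha hU)
  refine ⟨S, hSm, hS, ?_⟩
  filter_upwards [ha, hSb] with y hay hy i
  rw [hy, smul_inv_smul₀ (RCLike.ofReal_ne_zero.2 hay)]

end OrthonormalFields

section ImagesOfConstants

variable {𝕜 : Type*} [RCLike 𝕜] {X Y : Type*} [MeasurableSpace X] [MeasurableSpace Y]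
  {μ : Measure X} [IsFiniteMeasure μ] {ν : Measure Y} [IsFiniteMeasure ν] {p : ℝ≥0∞}
  [Fact (1 ≤ p)] {H K : Type*} [NormedAddCommGroup H] [InnerProductSpace 𝕜 H] [Nontrivial H]
  [NormedAddCommGroup K] [InnerProductSpace 𝕜 K] [Nontrivial K]

theorem Corresponds.setIntegral_norm_map_const_rpow {T : Lp H p μ ≃ₗᵢ[𝕜] Lp K p ν} {B : Set X}
    {E : Set Y} (hptop : p ≠ ∞) (hp2 : p ≠ 2) (h : Corresponds T B E) (hB : MeasurableSet B)
    (hE : MeasurableSet E) (e : H) :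
    ∫ y in E, ‖T (Lp.const p μ e) y‖ ^ p.toReal ∂ν = μ.real B * ‖e‖ ^ p.toReal := by
  have const_ae : ∀ᵐ x ∂μ, x ∈ B → ‖Lp.const p μ e x‖ ^ p.toReal = ‖e‖ ^ p.toReal := by
    filter_upwards [Lp.coeFn_const p μ e] with x hx _
    rw [hx, Function.const_apply]
  rw [h.setIntegral_norm_rpow hptop hp2 hB hE, setIntegral_congr_ae hB const_ae,
    setIntegral_const, smul_eq_mul]

theorem ae_norm_map_const_eq (hptop : p ≠ ∞) (hp2 : p ≠ 2) (T : Lp H p μ ≃ₗᵢ[𝕜] Lp K p ν) {e : H}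
    (he : ‖e‖ = 1) (h : H) :
    ∀ᵐ y ∂ν, ‖T (Lp.const p μ h) y‖ = ‖T (Lp.const p μ e) y‖ * ‖h‖ := by
  have hp0 : p ≠ 0 := (zero_lt_one.trans_le (Fact.out : 1 ≤ p)).ne'
  have hint (k : H) : Integrable (fun y ↦ ‖T (Lp.const p μ k) y‖ ^ p.toReal) ν :=
    (Lp.memLp _).integrable_norm_rpow hp0 hptop
  have rpow_ae_eq : (fun y ↦ ‖T (Lp.const p μ h) y‖ ^ p.toReal) =ᵐ[ν]
      fun y ↦ ‖T (Lp.const p μ e) y‖ ^ p.toReal * ‖h‖ ^ p.toReal := by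
    refine (hint h).ae_eq_of_forall_setIntegral_eq _ _ ((hint e).mul_const _) fun E hE _ ↦ ?_
    obtain ⟨B, hB, hEB⟩ := exists_corresponds hptop hp2 T.symm hE
    have hBE : Corresponds T B E := hEB.symm
    rw [integral_mul_const, hBE.setIntegral_norm_map_const_rpow hptop hp2 hB hE,
      hBE.setIntegral_norm_map_const_rpow hptop hp2 hB hE, he, Real.one_rpow, mul_one]
  filter_upwards [rpow_ae_eq] with y hy
  rw [← Real.mul_rpow (norm_nonneg _) (norm_nonneg _)] at hy
  exact (Real.rpow_left_inj (norm_nonneg _) (by positivity)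
    (ENNReal.toReal_pos hp0 hptop).ne').1 hy

theorem ae_map_const_ne_zero (hptop : p ≠ ∞) (hp2 : p ≠ 2) (T : Lp H p μ ≃ₗᵢ[𝕜] Lp K p ν) {e : H}
    (he : e ≠ 0) : ∀ᵐ y ∂ν, T (Lp.const p μ e) y ≠ 0 := by
  let E : Set Y := {y | T (Lp.const p μ e) y = 0}
  have hE : MeasurableSet E :=
    (Lp.stronglyMeasurable _).measurableSet_eq_fun stronglyMeasurable_const
  obtain ⟨B, -, hEB⟩ := exists_corresponds hptop hp2 T.symm hE
  have hBE : Corresponds T B E := hEB.symm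
  have const_vanishes : VanishesOn (Lp.const p μ e) B := (hBE _).2 (.of_forall fun _ hy ↦ hy)
  refine measure_eq_zero_iff_ae_notMem.1 (hBE.measure_eq_zero_iff.2 ?_)
  refine measure_eq_zero_iff_ae_notMem.2 ?_
  filter_upwards [const_vanishes, Lp.coeFn_const p μ e] with x hx hcoe hxB
  exact he (hcoe.symm.trans (hx hxB))

end ImagesOfConstants

section FiberwiseForm

variable {X Y : Type*} [MeasurableSpace X] [MeasurableSpace Y] {μ : Measure X} {ν : Measure Y}
  {p q : ℝ≥0∞} {H K : Type*} [NormedAddCommGroup H] [NormedAddCommGroup K]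

theorem ae_denseRange_of_surjective [IsFiniteMeasure ν] [TopologicalSpace.SeparableSpace K]
    {T : Lp H p μ → Lp K q ν} {A : Y → H → K} {σ : Y → X}
    (hT : Function.Surjective T) (h : ∀ f, ∀ᵐ y ∂ν, T f y = A y (f (σ y))) :
    ∀ᵐ y ∂ν, DenseRange (A y) := by
  choose f hf using fun n ↦ hT (Lp.const q ν (TopologicalSpace.denseSeq K n))
  filter_upwards [ae_all_iff.2 fun n ↦ h (f n),
    ae_all_iff.2 fun n ↦ Lp.coeFn_const q ν (TopologicalSpace.denseSeq K n)] with y hy hcoe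
  refine (TopologicalSpace.denseRange_denseSeq K).mono (Set.range_subset_iff.2 fun n ↦ ?_)
  exact ⟨f n (σ y), by rw [← hy, hf, hcoe, Function.const_apply]⟩

variable {𝕜 : Type*} [NormedField 𝕜] [NormedSpace 𝕜 H] [NormedSpace 𝕜 K] [Fact (1 ≤ p)]
  [Fact (1 ≤ q)]

/-- The functions on which `T` acts fiberwise, as composition with `σ` followed by the operator
field `A`. -/
def fiberwiseSubmodule (T : Lp H p μ →L[𝕜] Lp K q ν) (A : Y → H →L[𝕜] K) {σ : Y → X}
    (hσ : Measure.QuasiMeasurePreserving σ ν μ) : Submodule 𝕜 (Lp H p μ) where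
  carrier := {f | ∀ᵐ y ∂ν, T f y = A y (f (σ y))}
  zero_mem' := by
    change ∀ᵐ y ∂ν, T 0 y = A y ((0 : Lp H p μ) (σ y))
    rw [map_zero]
    filter_upwards [Lp.coeFn_zero K q ν, hσ.ae (Lp.coeFn_zero H p μ)] with y hTy hy
    rw [hTy, hy, Pi.zero_apply, Pi.zero_apply, map_zero]
  add_mem' {f g} hf hg := by
    change ∀ᵐ y ∂ν, T (f + g) y = A y ((f + g) (σ y))
    rw [map_add]
    filter_upwards [Lp.coeFn_add (T f) (T g), hσ.ae (Lp.coeFn_add f g), hf, hg]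
      with y hTy hy hfy hgy
    rw [hTy, hy, Pi.add_apply, Pi.add_apply, map_add, hfy, hgy]
  smul_mem' c f hf := by
    change ∀ᵐ y ∂ν, T (c • f) y = A y ((c • f) (σ y))
    rw [map_smul]
    filter_upwards [Lp.coeFn_smul c (T f), hσ.ae (Lp.coeFn_smul c f), hf] with y hTy hy hfy
    rw [hTy, hy, Pi.smul_apply, Pi.smul_apply, map_smul, hfy]

variable {T : Lp H p μ →L[𝕜] Lp K q ν} {A : Y → H →L[𝕜] K} {σ : Y → X}
  {hσ : Measure.QuasiMeasurePreserving σ ν μ}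

theorem mem_fiberwiseSubmodule {f : Lp H p μ} :
    f ∈ fiberwiseSubmodule T A hσ ↔ ∀ᵐ y ∂ν, T f y = A y (f (σ y)) := Iff.rfl

theorem isClosed_fiberwiseSubmodule : IsClosed (fiberwiseSubmodule T A hσ : Set (Lp H p μ)) := by
  refine IsSeqClosed.isClosed fun f g hf hfg ↦ ?_
  obtain ⟨n, hn, hfn⟩ := (tendstoInMeasure_of_tendsto_Lp hfg).exists_seq_tendsto_ae
  have hT : Filter.Tendsto (fun i ↦ T (f (n i))) Filter.atTop (nhds (T g)) :=
    (T.continuous.tendsto g).comp (hfg.comp hn.tendsto_atTop)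
  obtain ⟨m, hm, hTm⟩ := (tendstoInMeasure_of_tendsto_Lp hT).exists_seq_tendsto_ae
  filter_upwards [ae_all_iff.2 fun i ↦ mem_fiberwiseSubmodule.1 (hf i), hσ.ae hfn, hTm]
    with y hfy hy hTy
  refine tendsto_nhds_unique hTy ?_
  simp only [hfy]
  exact ((A y).continuous.tendsto _).comp (hy.comp hm.tendsto_atTop)

theorem const_mem_fiberwiseSubmodule [IsFiniteMeasure μ] {s : Set H}
    (hs : (Submodule.span 𝕜 s).topologicalClosure = ⊤)
    (h : ∀ e ∈ s, ∀ᵐ y ∂ν, T (Lp.const p μ e) y = A y e) (e : H) :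
    Lp.const p μ e ∈ fiberwiseSubmodule T A hσ := by
  let C : Submodule 𝕜 H := (fiberwiseSubmodule T A hσ).comap (Lp.constL p μ 𝕜).toLinearMap
  have C_isClosed : IsClosed (C : Set H) :=
    (isClosed_fiberwiseSubmodule (hσ := hσ)).preimage (Lp.constL p μ 𝕜).continuous
  have span_le : Submodule.span 𝕜 s ≤ C := Submodule.span_le.2 fun k hk ↦ by
    change ∀ᵐ y ∂ν, T (Lp.const p μ k) y = A y (Lp.const p μ k (σ y))
    filter_upwards [h k hk, hσ.ae (Lp.coeFn_const p μ k)] with y hy hcoe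
    rw [hy, hcoe, Function.const_apply]
  have top_le : ⊤ ≤ C := hs ▸ Submodule.topologicalClosure_minimal _ span_le C_isClosed
  exact top_le Submodule.mem_top

theorem fiberwiseSubmodule_eq_top [IsFiniteMeasure μ] (hptop : p ≠ ∞)
    (hconst : ∀ e, Lp.const p μ e ∈ fiberwiseSubmodule T A hσ)
    (hind : ∀ B, MeasurableSet B → ∀ f g : Lp H p μ, g =ᵐ[μ] B.indicator f →
      T g =ᵐ[ν] (σ ⁻¹' B).indicator (T f)) : fiberwiseSubmodule T A hσ = ⊤ := by
  refine Submodule.eq_top_iff'.2 fun f ↦ ?_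
  induction f using Lp.induction hptop with
  | @indicatorConst e B hB hμB =>
    rw [Lp.simpleFunc.coe_indicatorConst]
    have hcoe : indicatorConstLp p hB hμB.ne e =ᵐ[μ] B.indicator (Lp.const p μ e) :=
      indicatorConstLp_coeFn.trans ((Lp.coeFn_const p μ e).symm.indicator)
    filter_upwards [hind B hB _ _ hcoe, hconst e, hσ.ae hcoe] with y hTy hy hcoe_y
    rw [hTy, hcoe_y]
    by_cases hyB : σ y ∈ B
    · rw [Set.indicator_of_mem (Set.mem_preimage.2 hyB), Set.indicator_of_mem hyB, hy]
    · rw [Set.indicator_of_notMem (Set.mem_preimage.not.2 hyB), Set.indicator_of_notMem hyB,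
        map_zero]
  | add hf hg _ hf' hg' => exact add_mem hf' hg'
  | isClosed => exact isClosed_fiberwiseSubmodule (hσ := hσ)

end FiberwiseForm

section CanonicalForm

variable {𝕜 : Type*} [RCLike 𝕜] {X Y : Type*} [MeasurableSpace X] [MeasurableSpace Y]
  {μ : Measure X} [IsFiniteMeasure μ] {ν : Measure Y} [IsFiniteMeasure ν] {p : ℝ≥0∞}
  [Fact (1 ≤ p)] {H K : Type*} [NormedAddCommGroup H] [InnerProductSpace 𝕜 H] [Nontrivial H]
  [NormedAddCommGroup K] [InnerProductSpace 𝕜 K] [Nontrivial K]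

theorem ae_map_eq_of_corresponds_preimage (hptop : p ≠ ∞) (hp2 : p ≠ 2)
    {T : Lp H p μ ≃ₗᵢ[𝕜] Lp K p ν} {σ : Y → X} (hσ : Measurable σ)
    (hT : ∀ B, MeasurableSet B → Corresponds T B (σ ⁻¹' B)) {A : Y → H →L[𝕜] K} {s : Set H}
    (hs : (Submodule.span 𝕜 s).topologicalClosure = ⊤)
    (hA : ∀ e ∈ s, ∀ᵐ y ∂ν, T (Lp.const p μ e) y = A y e) (f : Lp H p μ) :
    ∀ᵐ y ∂ν, T f y = A y (f (σ y)) := by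
  have eq_top := fiberwiseSubmodule_eq_top (T := T.toContinuousLinearEquiv.toContinuousLinearMap)
    (hσ := quasiMeasurePreserving_of_corresponds_preimage hσ hT) hptop
    (const_mem_fiberwiseSubmodule hs hA)
    fun B hB _ _ hg ↦ (hT B hB).map_indicator hptop hp2 hB (hσ hB) hg
  exact mem_fiberwiseSubmodule.1 (Submodule.eq_top_iff'.1 eq_top f)

theorem exists_isometry_field_map_const [CompleteSpace K] {ι : Type*} [Countable ι]
    (hptop : p ≠ ∞) (hp2 : p ≠ 2) (T : Lp H p μ ≃ₗᵢ[𝕜] Lp K p ν) (b : HilbertBasis ι 𝕜 H) :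
    ∃ (a : Y → ℝ) (S : Y → H →L[𝕜] K), StronglyMeasurable a ∧ (∀ᵐ y ∂ν, a y ≠ 0) ∧
      (∀ h, StronglyMeasurable fun y ↦ S y h) ∧ (∀ᵐ y ∂ν, ∀ h, ‖S y h‖ = ‖h‖) ∧
      ∀ᵐ y ∂ν, ∀ i, T (Lp.const p μ (b i)) y = (a y : 𝕜) • S y (b i) := by
  obtain ⟨k, hk⟩ := exists_ne (0 : H)
  let e : H := (‖k‖ : 𝕜)⁻¹ • k
  have he : ‖e‖ = 1 := norm_smul_inv_norm hk
  have he0 : e ≠ 0 := norm_ne_zero_iff.1 (he ▸ one_ne_zero)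
  let a (y : Y) : ℝ := ‖T (Lp.const p μ e) y‖
  have ham : StronglyMeasurable a := (Lp.stronglyMeasurable _).norm
  have ha : ∀ᵐ y ∂ν, a y ≠ 0 :=
    (ae_map_const_ne_zero hptop hp2 T he0).mono fun _ ↦ norm_ne_zero_iff.2
  obtain ⟨S, hSm, hS, hSb⟩ := exists_isometry_field_of_ae_norm_eq
    (U := T.toLinearEquiv.toLinearMap ∘ₗ (Lp.constL p μ 𝕜).toLinearMap) b ham ha
    (ae_norm_map_const_eq hptop hp2 T he)
  exact ⟨a, S, ham, ha, hSm, hS, hSb⟩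

theorem Lp_hilbert_valued_isometries_canonical_form_general [StandardBorelSpace X]
    [StandardBorelSpace Y] [Uncountable X] [Uncountable Y] [CompleteSpace H] [CompleteSpace K]
    [TopologicalSpace.SeparableSpace H] [TopologicalSpace.SeparableSpace K]
    (hptop : p ≠ ∞) (hp2 : p ≠ 2) (T : Lp H p μ ≃ₗᵢ[𝕜] Lp K p ν) :
    ∃ (a : Y → ℝ) (σ : Y ≃ᵐ X) (S : Y → H →L[𝕜] K), Measurable a ∧ (∀ᵐ y ∂ν, a y ≠ 0) ∧
      (∀ B, MeasurableSet B → (ν (σ ⁻¹' B) = 0 ↔ μ B = 0)) ∧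
      (∀ h, StronglyMeasurable fun y ↦ S y h) ∧
      (∀ᵐ y ∂ν, Function.Surjective (S y) ∧ ∀ h, ‖S y h‖ = ‖h‖) ∧
      ∀ f, ∀ᵐ y ∂ν, T f y = (a y : 𝕜) • S y (f (σ y)) := by
  obtain ⟨σ, hσ⟩ := exists_measurableEquiv_corresponds_preimage hptop hp2 T
  obtain ⟨w, b, -⟩ := exists_hilbertBasis 𝕜 H
  have : Countable w := countable_of_orthonormal b.orthonormal
  obtain ⟨a, S, ham, ha, hSm, hS, hSb⟩ := exists_isometry_field_map_const hptop hp2 T b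
  have map_eq (f : Lp H p μ) : ∀ᵐ y ∂ν, T f y = (a y : 𝕜) • S y (f (σ y)) :=
    ae_map_eq_of_corresponds_preimage (A := fun y ↦ (a y : 𝕜) • S y) hptop hp2 σ.measurable hσ
      b.dense_span (Set.forall_mem_range.2 (ae_all_iff.1 hSb)) f
  refine ⟨a, σ, S, ham.measurable, ha, fun B hB ↦ (hσ B hB).measure_eq_zero_iff, hSm, ?_, map_eq⟩
  filter_upwards [hS, ae_denseRange_of_surjective
    (A := fun y h ↦ (a y : 𝕜) • S y h) T.surjective map_eq] with y hy hdense
  have S_closedRange : IsClosed (Set.range (S y)) :=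
    (AddMonoidHomClass.isometry_of_norm (S y) hy).isClosedEmbedding.isClosed_range
  have S_dense : DenseRange (S y) :=
    hdense.mono (Set.range_subset_iff.2 fun h ↦ ⟨(a y : 𝕜) • h, map_smul _ _ _⟩)
  exact ⟨Set.range_eq_univ.1 (S_closedRange.closure_eq.symm.trans S_dense.closure_eq), hy⟩

end CanonicalForm

/-- Surjective isometries of the Bochner space `L^p([0,1]; H)`, `1 ≤ p < ∞`, `p ≠ 2`,
`H` a separable real Hilbert space of dimension at least 2, have canonical vector form
`(T f)(t) = a(t) • S(t) (f(σ t))` a.e. -/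
theorem Lp_hilbert_valued_isometries_canonical_form
    (p : ℝ≥0∞) [Fact (1 ≤ p)] (hp1 : 1 ≤ p) (hptop : p ≠ ∞) (hp2 : p ≠ 2)
    {H : Type*} [NormedAddCommGroup H] [InnerProductSpace ℝ H] [CompleteSpace H]
    [TopologicalSpace.SeparableSpace H] [MeasurableSpace H] [BorelSpace H]
    (hdim : 2 ≤ Module.rank ℝ H)
    (T : Lp H p (volume : Measure (Set.Icc (0:ℝ) 1)) →ₗ[ℝ]
         Lp H p (volume : Measure (Set.Icc (0:ℝ) 1)))
    (hTsurj : Function.Surjective T)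
    (hTiso : ∀ f, ‖T f‖ = ‖f‖) :
    ∃ (a : Set.Icc (0:ℝ) 1 → ℝ) (σ : Set.Icc (0:ℝ) 1 ≃ Set.Icc (0:ℝ) 1)
      (S : Set.Icc (0:ℝ) 1 → (H →L[ℝ] H)),
      Measurable a ∧ (∀ᵐ t, a t ≠ 0) ∧
      Measurable (σ : Set.Icc (0:ℝ) 1 → Set.Icc (0:ℝ) 1) ∧
      Measurable (σ.symm : Set.Icc (0:ℝ) 1 → Set.Icc (0:ℝ) 1) ∧
      (∀ B : Set (Set.Icc (0:ℝ) 1), MeasurableSet B →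
        (volume ((σ : Set.Icc (0:ℝ) 1 → Set.Icc (0:ℝ) 1) ⁻¹' B) = 0 ↔ volume B = 0)) ∧
      (∀ h : H, Measurable fun t => S t h) ∧
      (∀ᵐ t, Function.Surjective (S t) ∧ ∀ h : H, ‖S t h‖ = ‖h‖) ∧
      ∀ f : Lp H p (volume : Measure (Set.Icc (0:ℝ) 1)),
        ∀ᵐ t, (T f) t = a t • S t (f (σ t)) := by
  have : Nontrivial H := not_subsingleton_iff_nontrivial.1 fun _ ↦
    absurd (hdim.trans_eq (rank_subsingleton' ℝ H)) (by norm_num)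
  have : Uncountable (Set.Icc (0 : ℝ) 1) :=
    not_countable_iff.1 (Cardinal.Real.Icc_countable_iff.not.2 one_pos.not_ge)
  obtain ⟨a, σ, S, ha, ha0, hσ, hS, hS', hT⟩ :=
    Lp_hilbert_valued_isometries_canonical_form_general hptop hp2
      (LinearIsometryEquiv.ofSurjective ⟨T, hTiso⟩ hTsurj)
  exact ⟨a, σ.toEquiv, S, ha, ha0, σ.measurable, σ.symm.measurable, hσ,
    fun h ↦ (hS h).measurable, hS', hT⟩
end

section
/- Let m ≥ 3, let d ≥ 2, and let N be a symmetric lattice norm on ℝ^m (functions Fin m → ℝ) which has property (P′) and which is not proportional to any ℓ_p-norm for 1 ≤ p ≤ ∞, i.e. there are no c > 0 and p ∈ [1, ∞] with N(x) = c·(∑ |x_i|^p)^{1/p} for all x (with the convention (∑|x_i|^∞)^{1/∞} = max_i |x_i|). Let H = ℝ^d with the Euclidean norm, and equip X = (Fin m → H) with the norm ‖f‖ = N(fun i => ‖f i‖_H). Then every surjective linear isometry T : X → X preserves disjointness in the vector sense: if f, g ∈ X satisfy ‖f i‖_H · ‖g i‖_H = 0 for every i, then ‖(T f) i‖_H ·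 ‖(T g) i‖_H = 0 for every i. -/
/-- `N` is a norm on `Fin m → ℝ`. -/
def IsNorm {m : ℕ} (N : (Fin m → ℝ) → ℝ) : Prop :=
  (∀ x, N x = 0 ↔ x = 0) ∧
  (∀ (c : ℝ) (x : Fin m → ℝ), N (c • x) = |c| * N x) ∧
  (∀ x y, N (x + y) ≤ N x + N y)

/-- `N` is a lattice norm: it depends only on coordinatewise absolute values, monotonically. -/
def IsLatticeNorm {m : ℕ} (N : (Fin m → ℝ) → ℝ) : Prop :=
  IsNorm N ∧ (∀ x, N x = N fun i => |x i|) ∧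
  ∀ x y : Fin m → ℝ, (∀ i, |x i| ≤ |y i|) → N x ≤ N y

/-- `N` is a symmetric lattice norm: a lattice norm invariant under permutations. -/
def IsSymmLatticeNorm {m : ℕ} (N : (Fin m → ℝ) → ℝ) : Prop :=
  IsLatticeNorm N ∧ ∀ (π : Equiv.Perm (Fin m)) (x : Fin m → ℝ), N (x ∘ π) = N x

/-- The dual norm `N′(y) = sup { ∑ i, x i * y i : N x ≤ 1 }`. -/
noncomputable def dualNorm {m : ℕ} (N : (Fin m → ℝ) → ℝ) (y : Fin m → ℝ) : ℝ :=
  sSup {s : ℝ | ∃ x : Fin m → ℝ, N x ≤ 1 ∧ s = ∑ i, x i * y i}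

/-- `N` is proportional to an `ℓ_p`-norm for some `1 ≤ p ≤ ∞`
(the case `p = ∞` being the max-norm). -/
def IsLpNorm {m : ℕ} (N : (Fin m → ℝ) → ℝ) : Prop :=
  (∃ p : ℝ, 1 ≤ p ∧ ∃ c : ℝ, 0 < c ∧
    ∀ x : Fin m → ℝ, N x = c * (∑ i, |x i| ^ p) ^ (1 / p)) ∨
  (∃ c : ℝ, 0 < c ∧ ∀ x : Fin m → ℝ, N x = c * ⨆ i, |x i|)

/-!
A linear isometry `T` preserves the unit ball of `f ↦ N (fun i => ‖f i‖)`. Block permutations and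
isometries acting blockwise also preserve this ball, so its second moment form is a multiple of the
inner product of the `ℓ²`-sum; since the adjoint of `T` preserves that form, `T` is orthogonal.

Let `e` be a vector supported on one block. The reflection in `ℝ ∙ e` leaves all block norms
unchanged, so its conjugate by `T`, the reflection in `ℝ ∙ T e`, is an isometry too. Suppose `T e`
had nonzero blocks `i ≠ j`. Among the vectors with prescribed Euclidean norm and `N`-norm, take one
maximising the norm of block `i`. If it had mass in another block, it could be rearranged, with its
block norms only permuted, so that the reflection in `ℝ ∙ T e` increases block `i` (here `dim H ≥ 2`
provides blocks orthogonal to those of `T e`). So it is supported on block `i`, and its two norms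
are proportional with a universal factor, which makes `N` Euclidean. Hence `T` and `T⁻¹` send
single blocks to single blocks, and this forces `T` to preserve disjointness.
-/

open MeasureTheory Set Submodule
open scoped ENNReal RealInnerProductSpace Topology

section LinearInvariance

variable {E : Type*} [NormedAddCommGroup E] [NormedSpace ℝ E] [FiniteDimensional ℝ E]
  [MeasurableSpace E] [BorelSpace E] {μ : Measure E} [μ.IsAddHaarMeasure]
  {K : Set E} {T : E ≃ₗ[ℝ] E}

theorem measurePreserving_of_preimage_eq (hKpos : μ K ≠ 0) (hKfin : μ K ≠ ⊤)
    (hTK : T ⁻¹' K = K) : MeasurePreserving T μ μ := by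
  have hdet : LinearMap.det (T : E →ₗ[ℝ] E) ≠ 0 := T.isUnit_det'.ne_zero
  have hfactor : ENNReal.ofReal |(LinearMap.det (T : E →ₗ[ℝ] E))⁻¹| = 1 := by
    have hvol : ENNReal.ofReal |(LinearMap.det (T : E →ₗ[ℝ] E))⁻¹| * μ K = 1 * μ K := by
      rw [← Measure.addHaar_preimage_linearMap μ hdet, LinearEquiv.coe_coe, hTK, one_mul]
    exact (ENNReal.mul_left_inj hKpos hKfin).1 hvol
  refine ⟨T.toContinuousLinearEquiv.continuous.measurable, ?_⟩
  have hmap := Measure.map_linearMap_addHaar_eq_smul_addHaar μ hdet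
  rwa [hfactor, one_smul] at hmap

theorem setIntegral_comp_of_preimage_eq (hKpos : μ K ≠ 0) (hKfin : μ K ≠ ⊤)
    (hTK : T ⁻¹' K = K) (F : E → ℝ) : ∫ v in K, F (T v) ∂μ = ∫ v in K, F v ∂μ := by
  have hemb : MeasurableEmbedding T :=
    T.toContinuousLinearEquiv.toHomeomorph.measurableEmbedding
  simpa only [hTK] using
    (measurePreserving_of_preimage_eq hKpos hKfin hTK).setIntegral_preimage_emb hemb F K

end LinearInvariance

section SecondMoment

variable {E : Type*} [NormedAddCommGroup E] [InnerProductSpace ℝ E] [FiniteDimensional ℝ E]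
  [MeasurableSpace E] [BorelSpace E] {K : Set E}

/-- The second moment form of a set with respect to Lebesgue measure; its matrix is the
(unnormalised) inertia matrix of `K`. -/
noncomputable def secondMoment (K : Set E) (x y : E) : ℝ :=
  ∫ v in K, ⟪x, v⟫ * ⟪y, v⟫

/-- A set is isotropic if its second moment form is a positive multiple of the inner product. -/
def IsIsotropic (K : Set E) : Prop :=
  ∃ c : ℝ, 0 < c ∧ ∀ x : E, secondMoment K x x = c * ‖x‖ ^ 2

theorem secondMoment_smul_self (r : ℝ) (x : E) :
    secondMoment K (r • x) (r • x) = r ^ 2 * secondMoment K x x := by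
  rw [secondMoment, secondMoment, ← integral_const_mul]
  congr 1 with v
  rw [real_inner_smul_left]
  ring

theorem secondMoment_neg_left (x y : E) : secondMoment K (-x) y = -secondMoment K x y := by
  simp only [secondMoment, inner_neg_left, neg_mul, integral_neg]

theorem secondMoment_sum_sum {ι : Type*} (s : Finset ι) (hK : IsCompact K) (x : ι → E) :
    secondMoment K (∑ i ∈ s, x i) (∑ i ∈ s, x i) =
      ∑ i ∈ s, ∑ j ∈ s, secondMoment K (x i) (x j) := by
  have hint {F : E → ℝ} (hF : Continuous F) : IntegrableOn F K :=
    hF.continuousOn.integrableOn_compact hK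
  simp only [secondMoment, sum_inner, Finset.sum_mul_sum]
  rw [integral_finsetSum _ fun i _ => hint (by fun_prop)]
  exact Finset.sum_congr rfl fun i _ => integral_finsetSum _ fun j _ => hint (by fun_prop)

theorem secondMoment_self_pos (hK : IsCompact K) (hK0 : K ∈ 𝓝 0) {x : E} (hx : x ≠ 0) :
    0 < secondMoment K x x := by
  have hcont : Continuous fun v : E => ⟪x, v⟫ * ⟪x, v⟫ := by fun_prop
  rw [secondMoment, setIntegral_pos_iff_support_of_nonneg_ae
    (.of_forall fun v => mul_self_nonneg _) (hcont.continuousOn.integrableOn_compact hK)]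
  have hsmall : ∀ᶠ t : ℝ in 𝓝[≠] 0, t • x ∈ interior K := by
    have hline : Continuous fun t : ℝ => t • x := by fun_prop
    have htend : Filter.Tendsto (fun t : ℝ => t • x) (𝓝 0) (𝓝 0) := by
      simpa only [zero_smul] using hline.tendsto 0
    exact (htend.mono_left nhdsWithin_le_nhds).eventually (interior_mem_nhds.2 hK0)
  obtain ⟨t, htK, ht⟩ := (hsmall.and self_mem_nhdsWithin).exists
  have hopen : IsOpen ((Function.support fun v : E => ⟪x, v⟫ * ⟪x, v⟫) ∩ interior K) :=
    hcont.isOpen_support.inter isOpen_interior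
  refine (hopen.measure_pos volume ⟨t • x, ?_, htK⟩).trans_le
    (measure_mono (inter_subset_inter_right _ interior_subset))
  simpa [real_inner_smul_right] using ⟨ht, hx⟩

theorem secondMoment_adjoint (hK : IsCompact K) (hK0 : K ∈ 𝓝 0) {T : E ≃ₗ[ℝ] E}
    (hTK : T ⁻¹' K = K) (x y : E) :
    secondMoment K (LinearMap.adjoint (T : E →ₗ[ℝ] E) x) (LinearMap.adjoint (T : E →ₗ[ℝ] E) y) =
      secondMoment K x y := by
  simp only [secondMoment, LinearMap.adjoint_inner_left]
  exact setIntegral_comp_of_preimage_eq (Measure.measure_pos_of_mem_nhds _ hK0).ne'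
    hK.measure_lt_top.ne hTK fun v => ⟪x, v⟫ * ⟪y, v⟫

theorem secondMoment_map_map (hK : IsCompact K) (hK0 : K ∈ 𝓝 0) {U : E ≃ₗᵢ[ℝ] E}
    (hUK : U ⁻¹' K = K) (x y : E) : secondMoment K (U x) (U y) = secondMoment K x y := by
  have h := setIntegral_comp_of_preimage_eq (Measure.measure_pos_of_mem_nhds volume hK0).ne'
    hK.measure_lt_top.ne (T := U.toLinearEquiv) hUK fun v => ⟪U x, v⟫ * ⟪U y, v⟫
  simpa only [secondMoment, LinearIsometryEquiv.coe_toLinearEquiv,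
    LinearIsometryEquiv.inner_map_map] using h.symm

-- The adjoint of `T` preserves the second moment form, hence the norm.
theorem IsIsotropic.norm_map (hiso : IsIsotropic K) (hK : IsCompact K) (hK0 : K ∈ 𝓝 0)
    {T : E ≃ₗ[ℝ] E} (hTK : T ⁻¹' K = K) (x : E) : ‖T x‖ = ‖x‖ := by
  obtain ⟨c, hc, hmoment⟩ := hiso
  have hadj (y : E) : ‖LinearMap.adjoint (T : E →ₗ[ℝ] E) y‖ = ‖y‖ := by
    have h := secondMoment_adjoint hK hK0 hTK y y
    rw [hmoment, hmoment] at h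
    exact (sq_eq_sq₀ (norm_nonneg _) (norm_nonneg _)).1 (mul_left_cancel₀ hc.ne' h)
  have hright (y : E) : T (LinearMap.adjoint (T : E →ₗ[ℝ] E) y) = y := by
    refine ext_inner_right ℝ fun z => ?_
    have h := (LinearIsometry.mk _ hadj).inner_map_map y z
    rwa [LinearIsometry.coe_mk, LinearMap.adjoint_inner_right] at h
  calc ‖T x‖ = ‖LinearMap.adjoint (T : E →ₗ[ℝ] E) (T x)‖ := (hadj _).symm
    _ = ‖x‖ := by rw [T.injective (hright (T x))]

end SecondMoment

section PiLpSingle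

variable {ι : Type*} [DecidableEq ι] {β : ι → Type*} [∀ i, AddCommGroup (β i)] {p : ℝ≥0∞}

theorem piLp_single_smul {R : Type*} [Semiring R] [∀ i, Module R (β i)] (i : ι) (r : R)
    (u : β i) : PiLp.single p i (r • u) = r • PiLp.single p i u := by
  rw [← PiLp.toLp_single, Pi.single_smul, WithLp.toLp_smul, PiLp.toLp_single]

theorem sum_piLp_single [Fintype ι] (x : PiLp p β) : ∑ i, PiLp.single p i (x i) = x := by
  ext i
  simp [WithLp.ofLp_sum]

theorem eq_piLp_single_of_forall_ne {x : PiLp p β} {i : ι} (hx : ∀ j ≠ i, x j = 0) :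
    x = PiLp.single p i (x i) := by
  ext j
  rcases eq_or_ne j i with rfl | hj
  · simp
  · simp [hx j hj, hj]

end PiLpSingle

section BlockSymmetry

variable {ι H : Type*} [NormedAddCommGroup H]

/-- A subset of the `ℓ²`-sum of copies of `H` is block symmetric if membership of a vector depends
only on the norms of its blocks, up to a permutation of the blocks. -/
def IsBlockSymmetric (K : Set (PiLp 2 fun _ : ι => H)) : Prop :=
  ∀ (σ : Equiv.Perm ι) (x y : PiLp 2 fun _ : ι => H), (∀ i, ‖y i‖ = ‖x (σ i)‖) → x ∈ K → y ∈ K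

variable {K : Set (PiLp 2 fun _ : ι => H)}

theorem IsBlockSymmetric.preimage_eq (hsymm : IsBlockSymmetric K) (σ : Equiv.Perm ι)
    {U : (PiLp 2 fun _ : ι => H) → PiLp 2 fun _ : ι => H}
    (hU : ∀ x i, ‖U x i‖ = ‖x (σ i)‖) : U ⁻¹' K = K := by
  ext x
  refine ⟨hsymm σ.symm (U x) x fun i => ?_, hsymm σ x (U x) (hU x)⟩
  rw [hU, σ.apply_symm_apply]

variable [Fintype ι] [InnerProductSpace ℝ H]

section Isotropy

variable [FiniteDimensional ℝ H] [MeasurableSpace (PiLp 2 fun _ : ι => H)]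
  [BorelSpace (PiLp 2 fun _ : ι => H)]

theorem IsBlockSymmetric.secondMoment_single_single_of_ne [DecidableEq ι]
    (hsymm : IsBlockSymmetric K)
    (hK : IsCompact K) (hK0 : K ∈ 𝓝 0) {i j : ι} (hij : i ≠ j) (u u' : H) :
    secondMoment K (PiLp.single 2 i u) (PiLp.single 2 j u') = 0 := by
  let flip : (PiLp 2 fun _ : ι => H) ≃ₗᵢ[ℝ] PiLp 2 fun _ : ι => H :=
    .piLpCongrRight 2 fun k => if k = i then .neg ℝ else .refl ℝ H
  have hflip : flip ⁻¹' K = K := hsymm.preimage_eq 1 fun x k => by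
    simp only [flip, LinearIsometryEquiv.piLpCongrRight_apply, Equiv.Perm.one_apply]
    split_ifs <;> simp
  have h := secondMoment_map_map hK hK0 hflip (PiLp.single 2 i u) (PiLp.single 2 j u')
  have hi : flip (PiLp.single 2 i u) = -PiLp.single 2 i u := by
    simp [flip, PiLp.single_neg]
  have hj : flip (PiLp.single 2 j u') = PiLp.single 2 j u' := by
    simp [flip, hij.symm]
  rw [hi, hj, secondMoment_neg_left] at h
  exact neg_eq_self.1 h

theorem IsBlockSymmetric.secondMoment_single_self_eq [DecidableEq ι] (hsymm : IsBlockSymmetric K)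
    (hK : IsCompact K) (hK0 : K ∈ 𝓝 0) (i j : ι) {u u' : H} (huu' : ‖u‖ = ‖u'‖) :
    secondMoment K (PiLp.single 2 i u) (PiLp.single 2 i u) =
      secondMoment K (PiLp.single 2 j u') (PiLp.single 2 j u') := by
  let R : H ≃ₗᵢ[ℝ] H := (ℝ ∙ (u - u'))ᗮ.reflection
  let U : (PiLp 2 fun _ : ι => H) ≃ₗᵢ[ℝ] PiLp 2 fun _ : ι => H :=
    (LinearIsometryEquiv.piLpCongrRight 2 fun _ => R).trans
      (.piLpCongrLeft 2 ℝ H (Equiv.swap i j))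
  have hUK : U ⁻¹' K = K :=
    hsymm.preimage_eq (Equiv.swap i j) fun x k => R.norm_map (x (Equiv.swap i j k))
  have hU : U (PiLp.single 2 i u) = PiLp.single 2 j u' := by
    simp [U, R, reflection_sub huu']
  rw [← secondMoment_map_map hK hK0 hUK, hU]

theorem IsBlockSymmetric.isIsotropic (hsymm : IsBlockSymmetric K) (hK : IsCompact K)
    (hK0 : K ∈ 𝓝 0) : IsIsotropic K := by
  classical
  rcases subsingleton_or_nontrivial (PiLp 2 fun _ : ι => H) with _ | _
  · exact ⟨1, one_pos, fun x => by simp [Subsingleton.elim x 0, secondMoment]⟩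
  obtain ⟨x₀, hx₀⟩ := exists_ne (0 : PiLp 2 fun _ : ι => H)
  obtain ⟨i₀, hu⟩ : ∃ i, x₀ i ≠ 0 := by
    by_contra! h
    exact hx₀ (PiLp.ext h)
  set u := x₀ i₀
  set q := secondMoment K (PiLp.single 2 i₀ u) (PiLp.single 2 i₀ u)
  have hq : 0 < q := secondMoment_self_pos hK hK0 (by simpa using hu)
  have hu2 : 0 < ‖u‖ ^ 2 := by positivity
  have hblock (i : ι) (z : H) :
      secondMoment K (PiLp.single 2 i z) (PiLp.single 2 i z) = q / ‖u‖ ^ 2 * ‖z‖ ^ 2 := by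
    have h := hsymm.secondMoment_single_self_eq hK hK0 i i₀
      (u := ‖u‖ • z) (u' := ‖z‖ • u) (by simp [norm_smul, mul_comm])
    rw [piLp_single_smul, piLp_single_smul, secondMoment_smul_self, secondMoment_smul_self] at h
    field_simp
    linarith
  refine ⟨q / ‖u‖ ^ 2, div_pos hq hu2, fun x => ?_⟩
  calc secondMoment K x x
      = ∑ i, ∑ j, secondMoment K (PiLp.single 2 i (x i)) (PiLp.single 2 j (x j)) := by
        rw [← secondMoment_sum_sum _ hK, sum_piLp_single]
    _ = ∑ i, secondMoment K (PiLp.single 2 i (x i)) (PiLp.single 2 i (x i)) :=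
        Finset.sum_congr rfl fun i _ => Finset.sum_eq_single i
          (fun j _ hj => hsymm.secondMoment_single_single_of_ne hK hK0 hj.symm _ _) (by simp)
    _ = q / ‖u‖ ^ 2 * ‖x‖ ^ 2 := by
        simp only [hblock, ← Finset.mul_sum, PiLp.norm_sq_eq_of_L2]

end Isotropy

theorem IsBlockSymmetric.norm_map_of_preimage_eq [FiniteDimensional ℝ H]
    (hsymm : IsBlockSymmetric K) (hK : IsCompact K) (hK0 : K ∈ 𝓝 0)
    {T : (PiLp 2 fun _ : ι => H) ≃ₗ[ℝ] PiLp 2 fun _ : ι => H} (hTK : T ⁻¹' K = K)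
    (x : PiLp 2 fun _ : ι => H) : ‖T x‖ = ‖x‖ := by
  classical
  borelize (PiLp 2 fun _ : ι => H)
  exact (hsymm.isIsotropic hK hK0).norm_map hK hK0 hTK x

theorem exists_norm_eq_inner_eq_zero (hH : 1 < Module.rank ℝ H) (w : H) {r : ℝ} (hr : 0 ≤ r) :
    ∃ v : H, ‖v‖ = r ∧ ⟪w, v⟫ = 0 := by
  have hne : (ℝ ∙ w)ᗮ ≠ ⊥ := by
    intro hbot
    have htop : (ℝ ∙ w) = ⊤ := (orthogonal_eq_bot_iff).1 hbot
    have hrank := rank_span_le (R := ℝ) {w}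
    rw [htop, rank_top, Cardinal.mk_singleton] at hrank
    exact hH.not_ge hrank
  have : Nontrivial (ℝ ∙ w)ᗮ := nontrivial_iff_ne_bot.2 hne
  obtain ⟨v, hv⟩ := exists_norm_eq (ℝ ∙ w)ᗮ hr
  exact ⟨v, hv, mem_orthogonal_singleton_iff_inner_right.1 v.2⟩

theorem norm_sq_reflection_singleton_apply_of_inner_eq_zero (w y : PiLp 2 fun _ : ι => H) {i : ι}
    (hi : ⟪w i, y i⟫ = 0) :
    ‖(ℝ ∙ w).reflection y i‖ ^ 2 = ‖y i‖ ^ 2 + (2 * (⟪w, y⟫ / ‖w‖ ^ 2)) ^ 2 * ‖w i‖ ^ 2 := by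
  have hrefl : (ℝ ∙ w).reflection y i = (2 * (⟪w, y⟫ / ‖w‖ ^ 2)) • w i - y i := by
    simp [reflection_singleton_apply, two_smul, two_mul, add_smul]
  rw [hrefl, norm_sub_sq_real, real_inner_smul_left, hi, norm_smul, mul_pow, Real.norm_eq_abs,
    sq_abs]
  ring

theorem exists_forall_norm_eq_inner_eq (hH : 1 < Module.rank ℝ H) (w : PiLp 2 fun _ : ι => H)
    {r : ι → ℝ} (hr : ∀ p, 0 ≤ r p) {j : ι} (hj : w j ≠ 0) :
    ∃ y : PiLp 2 fun _ : ι => H, (∀ p, ‖y p‖ = r p) ∧ (∀ p ≠ j, ⟪w p, y p⟫ = 0) ∧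
      ⟪w, y⟫ = r j * ‖w j‖ := by
  classical
  choose v hvnorm hvinner using fun p => exists_norm_eq_inner_eq_zero hH (w p) (hr p)
  let aligned : H := (r j / ‖w j‖) • w j
  let y : PiLp 2 fun _ : ι => H := WithLp.toLp 2 (Function.update v j aligned)
  have hy (p : ι) (hp : p ≠ j) : y p = v p := Function.update_of_ne hp _ _
  have hyj : y j = aligned := Function.update_self j aligned v
  have horth (p : ι) (hp : p ≠ j) : ⟪w p, y p⟫ = 0 := by rw [hy p hp, hvinner]
  refine ⟨y, fun p => ?_, horth, ?_⟩
  · rcases eq_or_ne p j with rfl | hp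
    · simp [hyj, aligned, norm_smul, hj, abs_of_nonneg (hr p)]
    · rw [hy p hp, hvnorm]
  · have : ‖w j‖ ≠ 0 := norm_ne_zero_iff.2 hj
    rw [PiLp.inner_apply, Finset.sum_eq_single j (fun p _ => horth p) (by simp), hyj,
      real_inner_smul_right, real_inner_self_eq_norm_sq]
    field_simp

theorem exists_norm_lt_norm_reflection_apply [DecidableEq ι] (hH : 1 < Module.rank ℝ H)
    {w y : PiLp 2 fun _ : ι => H} {i j l : ι} (hij : i ≠ j) (hi : w i ≠ 0) (hj : w j ≠ 0)
    (hil : i ≠ l) (hyl : y l ≠ 0) :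
    ∃ z : PiLp 2 fun _ : ι => H, (∀ p, ‖z p‖ = ‖y (Equiv.swap j l p)‖) ∧
      ‖y i‖ < ‖(ℝ ∙ w).reflection z i‖ := by
  obtain ⟨z, hznorm, hzorth, hinner⟩ := exists_forall_norm_eq_inner_eq hH w
    (r := fun p => ‖y (Equiv.swap j l p)‖) (fun _ => norm_nonneg _) hj
  refine ⟨z, hznorm, lt_of_pow_lt_pow_left₀ 2 (norm_nonneg _) ?_⟩
  rw [norm_sq_reflection_singleton_apply_of_inner_eq_zero w z (hzorth i hij), hinner, hznorm,
    Equiv.swap_apply_left, Equiv.swap_apply_of_ne_of_ne hij hil]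
  have hw : w ≠ 0 := by
    rintro rfl
    exact hi rfl
  have : 0 < ‖w‖ := norm_pos_iff.2 hw
  have : 0 < ‖w i‖ := norm_pos_iff.2 hi
  have : 0 < ‖w j‖ := norm_pos_iff.2 hj
  have : 0 < ‖y l‖ := norm_pos_iff.2 hyl
  exact lt_add_of_pos_right _ (by positivity)

-- A vector of `K` with the largest possible block `i` has no other nonzero block.
theorem IsBlockSymmetric.exists_single_mem [DecidableEq ι] (hH : 1 < Module.rank ℝ H)
    (hsymm : IsBlockSymmetric K) (hK : IsCompact K) (hne : K.Nonempty)
    {w : PiLp 2 fun _ : ι => H} (hwK : MapsTo (ℝ ∙ w).reflection K K) {i j : ι} (hij : i ≠ j)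
    (hi : w i ≠ 0) (hj : w j ≠ 0) : ∃ u : H, PiLp.single 2 i u ∈ K := by
  obtain ⟨y, hyK, hmax⟩ := hK.exists_isMaxOn hne (f := fun y => ‖y i‖) (by fun_prop)
  suffices hy : ∀ l ≠ i, y l = 0 from ⟨y i, eq_piLp_single_of_forall_ne hy ▸ hyK⟩
  intro l hl
  by_contra hyl
  obtain ⟨z, hz, hlt⟩ := exists_norm_lt_norm_reflection_apply hH hij hi hj hl.symm hyl
  exact hlt.not_ge (hmax (hwK (hsymm (Equiv.swap j l) y z hz hyK)))

end BlockSymmetry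

section Norms

variable {m : ℕ} {N : (Fin m → ℝ) → ℝ}

/-- `N` is proportional to the Euclidean norm. -/
def IsEuclideanNorm (N : (Fin m → ℝ) → ℝ) : Prop :=
  ∃ c : ℝ, 0 < c ∧ ∀ x : Fin m → ℝ, N x = c * √(∑ i, x i ^ 2)

theorem IsEuclideanNorm.isLpNorm (hN : IsEuclideanNorm N) : IsLpNorm N := by
  obtain ⟨c, hc, hN⟩ := hN
  refine Or.inl ⟨2, one_le_two, c, hc, fun x => ?_⟩
  simp only [hN, Real.sqrt_eq_rpow, Real.rpow_two, sq_abs]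

theorem IsNorm.pos (hN : IsNorm N) {x : Fin m → ℝ} (hx : x ≠ 0) : 0 < N x := by
  have hneg : N (-x) = N x := by simpa using hN.2.1 (-1) x
  have hadd : N 0 ≤ N x + N x := by simpa [hneg] using hN.2.2 x (-x)
  have hzero : N 0 = 0 := (hN.1 0).2 rfl
  have hne : N x ≠ 0 := mt (hN.1 x).1 hx
  exact lt_of_le_of_ne (by linarith) hne.symm

theorem IsNorm.continuous (hN : IsNorm N) : Continuous N := by
  have hconvex : ConvexOn ℝ univ N := by
    refine ⟨convex_univ, fun x _ y _ a b ha hb _ => ?_⟩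
    calc N (a • x + b • y) ≤ N (a • x) + N (b • y) := hN.2.2 _ _
      _ = a • N x + b • N y := by
        rw [hN.2.1, hN.2.1, abs_of_nonneg ha, abs_of_nonneg hb, smul_eq_mul, smul_eq_mul]
  exact hconvex.locallyLipschitz.continuous

theorem IsNorm.map_single (hN : IsNorm N) (i : Fin m) (r : ℝ) :
    N (Pi.single i r) = |r| * N (Pi.single i 1) := by
  rw [← hN.2.1, ← Pi.single_smul, smul_eq_mul, mul_one]

theorem IsLatticeNorm.abs_apply_mul_le (hN : IsLatticeNorm N) (i : Fin m) (x : Fin m → ℝ) :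
    |x i| * N (Pi.single i 1) ≤ N x := by
  rw [← hN.1.map_single]
  refine hN.2.2 _ _ fun j => ?_
  rcases eq_or_ne j i with rfl | hj
  · rw [Pi.single_eq_same]
  · simp [hj]

end Norms

section MixedNorm

variable {m : ℕ} {N : (Fin m → ℝ) → ℝ} {H : Type*} [NormedAddCommGroup H]

/-- The norm of the Köthe–Bochner space of `H`-valued functions associated with `N`. -/
def mixedNorm (N : (Fin m → ℝ) → ℝ) (f : Fin m → H) : ℝ :=
  N fun i => ‖f i‖

theorem IsNorm.continuous_mixedNorm (hN : IsNorm N) :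
    Continuous fun x : PiLp 2 fun _ : Fin m => H => mixedNorm N x.ofLp :=
  hN.continuous.comp (by fun_prop)

theorem IsNorm.mixedNorm_single (hN : IsNorm N) (i : Fin m) (u : H) :
    mixedNorm N (Pi.single i u) = N (Pi.single i 1) * ‖u‖ := by
  have hprofile : (fun k => ‖(Pi.single i u : Fin m → H) k‖) = Pi.single i ‖u‖ :=
    funext fun k => Pi.apply_single (fun _ (z : H) => ‖z‖) (fun _ => norm_zero) i u k
  rw [mixedNorm, hprofile, hN.map_single, abs_norm, mul_comm]

theorem IsNorm.mixedNorm_eq_zero_iff (hN : IsNorm N) {f : Fin m → H} :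
    mixedNorm N f = 0 ↔ f = 0 := by
  rw [mixedNorm, hN.1, funext_iff, funext_iff]
  simp only [Pi.zero_apply, norm_eq_zero]

theorem IsNorm.injective_of_mixedNorm_map {R : Type*} [Ring R] [Module R H] (hN : IsNorm N)
    {T : (Fin m → H) →ₗ[R] (Fin m → H)}
    (hT : ∀ f, mixedNorm N (T f) = mixedNorm N f) : Function.Injective T := by
  refine (injective_iff_map_eq_zero T).2 fun f hf => ?_
  rw [← hN.mixedNorm_eq_zero_iff, ← hT, hf, hN.mixedNorm_eq_zero_iff]

theorem IsSymmLatticeNorm.mixedNorm_eq_of_norm_eq (hN : IsSymmLatticeNorm N)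
    (σ : Equiv.Perm (Fin m)) {f g : Fin m → H} (hfg : ∀ i, ‖g i‖ = ‖f (σ i)‖) :
    mixedNorm N g = mixedNorm N f := by
  simp only [mixedNorm, hfg]
  exact hN.2 σ fun i => ‖f i‖

theorem IsSymmLatticeNorm.isBlockSymmetric_mixedNorm_le (hN : IsSymmLatticeNorm N) (r : ℝ) :
    IsBlockSymmetric {x : PiLp 2 fun _ : Fin m => H | mixedNorm N x.ofLp ≤ r} :=
  fun σ _ _ hxy hx => (hN.mixedNorm_eq_of_norm_eq σ hxy).trans_le hx

theorem IsSymmLatticeNorm.isBlockSymmetric_sphere_inter_mixedNorm_eq (hN : IsSymmLatticeNorm N)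
    (r s : ℝ) :
    IsBlockSymmetric
      (Metric.sphere 0 r ∩ {x : PiLp 2 fun _ : Fin m => H | mixedNorm N x.ofLp = s}) := by
  rintro σ x y hxy ⟨hxr, hxs⟩
  refine ⟨?_, (hN.mixedNorm_eq_of_norm_eq σ hxy).trans hxs⟩
  rw [mem_sphere_zero_iff_norm] at hxr ⊢
  rw [← hxr, PiLp.norm_eq_of_L2, PiLp.norm_eq_of_L2]
  simp only [hxy]
  rw [Equiv.sum_comp σ fun k => ‖x k‖ ^ 2]

theorem IsNorm.mixedNorm_le_mem_nhds (hN : IsNorm N) {r : ℝ} (hr : 0 < r) :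
    {x : PiLp 2 fun _ : Fin m => H | mixedNorm N x.ofLp ≤ r} ∈ 𝓝 0 := by
  have hzero : mixedNorm N (0 : PiLp 2 fun _ : Fin m => H).ofLp < r := by
    rwa [WithLp.ofLp_zero, hN.mixedNorm_eq_zero_iff.2 rfl]
  exact (hN.continuous_mixedNorm.tendsto 0).eventually_le_const hzero

variable [InnerProductSpace ℝ H]

theorem norm_reflection_single_apply {ι : Type*} [Fintype ι] [DecidableEq ι] (k : ι) (e : H)
    (x : PiLp 2 fun _ : ι => H) (i : ι) :
    ‖(ℝ ∙ (PiLp.single 2 k e : PiLp 2 fun _ : ι => H)).reflection x i‖ = ‖x i‖ := by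
  have hinner : ⟪(PiLp.single 2 k e : PiLp 2 fun _ : ι => H), x⟫ = ⟪e, x k⟫ := by
    rw [PiLp.inner_apply, Finset.sum_eq_single k] <;> simp +contextual
  rw [reflection_singleton_apply, hinner, PiLp.norm_single]
  rcases eq_or_ne i k with rfl | hik
  · rw [← (ℝ ∙ e).reflection.norm_map (x i), reflection_singleton_apply]
    simp
  · simp [hik]

theorem mixedNorm_reflection_map_single
    {S : (PiLp 2 fun _ : Fin m => H) ≃ₗᵢ[ℝ] PiLp 2 fun _ : Fin m => H}
    (hS : ∀ x, mixedNorm N (S x).ofLp = mixedNorm N x.ofLp) (k : Fin m) (e : H)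
    (x : PiLp 2 fun _ : Fin m => H) :
    mixedNorm N ((ℝ ∙ S (PiLp.single 2 k e)).reflection x).ofLp = mixedNorm N x.ofLp := by
  have hconj : (ℝ ∙ S (PiLp.single 2 k e)).reflection x =
      S ((ℝ ∙ (PiLp.single 2 k e : PiLp 2 fun _ : Fin m => H)).reflection (S.symm x)) := by
    rw [← reflection_map_apply]
    simp only [map_span, image_singleton]
    rfl
  calc mixedNorm N ((ℝ ∙ S (PiLp.single 2 k e)).reflection x).ofLp
      = mixedNorm N ((ℝ ∙ (PiLp.single 2 k e : PiLp 2 fun _ : Fin m => H)).reflection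
          (S.symm x)).ofLp := by rw [hconj, hS]
    _ = mixedNorm N (S.symm x).ofLp :=
        congrArg N (funext fun i => norm_reflection_single_apply k e (S.symm x) i)
    _ = mixedNorm N x.ofLp := by rw [← hS, S.apply_symm_apply]

variable [FiniteDimensional ℝ H]

theorem IsLatticeNorm.isCompact_mixedNorm_le (hN : IsLatticeNorm N) (r : ℝ) :
    IsCompact {x : PiLp 2 fun _ : Fin m => H | mixedNorm N x.ofLp ≤ r} := by
  refine Metric.isCompact_of_isClosed_isBounded
    (isClosed_le hN.1.continuous_mixedNorm continuous_const) ?_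
  refine isBounded_iff_forall_norm_le.2
    ⟨√(∑ i, (r / N (Pi.single i 1)) ^ 2), fun x hx => ?_⟩
  rw [PiLp.norm_eq_of_L2]
  gcongr with i
  rw [le_div_iff₀ (hN.1.pos (Pi.single_ne_zero_iff.2 one_ne_zero))]
  calc ‖x i‖ * N (Pi.single i 1) = |‖x i‖| * N (Pi.single i 1) := by rw [abs_norm]
    _ ≤ mixedNorm N x.ofLp := hN.abs_apply_mul_le i fun p => ‖x p‖
    _ ≤ r := hx

theorem IsSymmLatticeNorm.norm_map_of_mixedNorm_map (hN : IsSymmLatticeNorm N)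
    {S : (PiLp 2 fun _ : Fin m => H) ≃ₗ[ℝ] PiLp 2 fun _ : Fin m => H}
    (hS : ∀ x, mixedNorm N (S x).ofLp = mixedNorm N x.ofLp) (x : PiLp 2 fun _ : Fin m => H) :
    ‖S x‖ = ‖x‖ := by
  have hball : S ⁻¹' {x | mixedNorm N x.ofLp ≤ 1} = {x | mixedNorm N x.ofLp ≤ 1} := by
    ext y
    simp only [preimage_ofPred_eq, hS]
  exact (hN.isBlockSymmetric_mixedNorm_le 1).norm_map_of_preimage_eq
    (hN.1.isCompact_mixedNorm_le 1) (hN.1.1.mixedNorm_le_mem_nhds one_pos) hball x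

theorem IsSymmLatticeNorm.mixedNorm_eq_mul_norm_of_reflection (hN : IsSymmLatticeNorm N)
    (hH : 1 < Module.rank ℝ H) {w : PiLp 2 fun _ : Fin m => H}
    (hw : ∀ x, mixedNorm N ((ℝ ∙ w).reflection x).ofLp = mixedNorm N x.ofLp)
    {i j : Fin m} (hij : i ≠ j) (hi : w i ≠ 0) (hj : w j ≠ 0) (x : PiLp 2 fun _ : Fin m => H) :
    mixedNorm N x.ofLp = N (Pi.single i 1) * ‖x‖ := by
  let K : Set (PiLp 2 fun _ : Fin m => H) :=
    Metric.sphere 0 ‖x‖ ∩ {y | mixedNorm N y.ofLp = mixedNorm N x.ofLp}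
  have hK : IsCompact K := (isCompact_sphere 0 ‖x‖).inter_right
    (isClosed_eq hN.1.1.continuous_mixedNorm continuous_const)
  have hxK : x ∈ K := ⟨mem_sphere_zero_iff_norm.2 rfl, rfl⟩
  have hrefl : MapsTo (ℝ ∙ w).reflection K K := by
    rintro y ⟨hynorm, hyN⟩
    rw [mem_sphere_zero_iff_norm] at hynorm
    exact ⟨mem_sphere_zero_iff_norm.2 (by rw [LinearIsometryEquiv.norm_map, hynorm]),
      (hw y).trans hyN⟩
  obtain ⟨u, hunorm, huN⟩ := (hN.isBlockSymmetric_sphere_inter_mixedNorm_eq _ _).exists_single_mem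
    hH hK ⟨x, hxK⟩ hrefl hij hi hj
  rw [mem_sphere_zero_iff_norm, PiLp.norm_single] at hunorm
  rw [← hunorm, ← hN.1.1.mixedNorm_single]
  exact huN.symm

theorem IsSymmLatticeNorm.isEuclideanNorm_of_mixedNorm_reflection (hN : IsSymmLatticeNorm N)
    (hH : 1 < Module.rank ℝ H) {w : PiLp 2 fun _ : Fin m => H}
    (hw : ∀ x, mixedNorm N ((ℝ ∙ w).reflection x).ofLp = mixedNorm N x.ofLp)
    {i j : Fin m} (hij : i ≠ j) (hi : w i ≠ 0) (hj : w j ≠ 0) : IsEuclideanNorm N := by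
  obtain ⟨u, hu, -⟩ := exists_norm_eq_inner_eq_zero hH 0 zero_le_one
  refine ⟨N (Pi.single i 1), hN.1.1.pos (Pi.single_ne_zero_iff.2 one_ne_zero), fun t => ?_⟩
  have h := hN.mixedNorm_eq_mul_norm_of_reflection hH hw hij hi hj (WithLp.toLp 2 fun k => t k • u)
  simp only [mixedNorm, PiLp.norm_eq_of_L2, norm_smul, hu, mul_one, Real.norm_eq_abs, sq_abs] at h
  rw [hN.1.2.1, h]

theorem IsSymmLatticeNorm.support_map_single_subsingleton (hN : IsSymmLatticeNorm N)
    (hNeucl : ¬ IsEuclideanNorm N) (hH : 1 < Module.rank ℝ H)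
    {T : (Fin m → H) ≃ₗ[ℝ] (Fin m → H)} (hT : ∀ f, mixedNorm N (T f) = mixedNorm N f)
    (k : Fin m) (e : H) : (Function.support (T (Pi.single k e))).Subsingleton := by
  let toPi : (PiLp 2 fun _ : Fin m => H) ≃ₗ[ℝ] (Fin m → H) := WithLp.linearEquiv 2 ℝ (Fin m → H)
  let S : (PiLp 2 fun _ : Fin m => H) ≃ₗ[ℝ] PiLp 2 fun _ : Fin m => H :=
    toPi ≪≫ₗ T ≪≫ₗ toPi.symm
  have hS (x : PiLp 2 fun _ : Fin m => H) : mixedNorm N (S x).ofLp = mixedNorm N x.ofLp :=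
    hT x.ofLp
  let U : (PiLp 2 fun _ : Fin m => H) ≃ₗᵢ[ℝ] PiLp 2 fun _ : Fin m => H :=
    ⟨S, hN.norm_map_of_mixedNorm_map hS⟩
  intro i hi j hj
  by_contra hij
  exact hNeucl (hN.isEuclideanNorm_of_mixedNorm_reflection hH
    (mixedNorm_reflection_map_single (S := U) hS k e) hij hi hj)

end MixedNorm

section Disjointness

variable {ι M : Type*} [DecidableEq ι] [AddCommMonoid M]

theorem exists_map_single_apply_ne_zero [Finite ι] (T : (ι → M) →+ (ι → M)) {f : ι → M} {i : ι}
    (hi : T f i ≠ 0) : ∃ k, T (Pi.single k (f k)) i ≠ 0 := by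
  cases nonempty_fintype ι
  by_contra! hzero
  refine hi ?_
  rw [← Finset.univ_sum_single f, map_sum, Finset.sum_apply]
  exact Finset.sum_eq_zero fun k _ => hzero k

theorem eq_single_of_support_subsingleton {f : ι → M} {i : ι}
    (hf : (Function.support f).Subsingleton) (hi : f i ≠ 0) : f = Pi.single i (f i) := by
  ext j
  rcases eq_or_ne j i with rfl | hj
  · rw [Pi.single_eq_same]
  · rw [Pi.single_eq_of_ne hj]
    by_contra hfj
    exact hj (hf hfj hi)

-- If blocks `k ≠ l` were both sent into block `i`, then `T.symm` would spread a single block over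
-- both `k` and `l`.
theorem apply_eq_zero_or_of_support_map_single_subsingleton [Finite ι]
    (T : (ι → M) ≃+ (ι → M))
    (hT : ∀ k e, (Function.support (T (Pi.single k e))).Subsingleton)
    (hTsymm : ∀ k e, (Function.support (T.symm (Pi.single k e))).Subsingleton)
    {f g : ι → M} (hfg : ∀ k, f k = 0 ∨ g k = 0) (i : ι) : T f i = 0 ∨ T g i = 0 := by
  by_contra! ⟨hf, hg⟩
  obtain ⟨k, hk⟩ := exists_map_single_apply_ne_zero (T : (ι → M) →+ (ι → M)) hf
  obtain ⟨l, hl⟩ := exists_map_single_apply_ne_zero (T : (ι → M) →+ (ι → M)) hg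
  have hfk : f k ≠ 0 := fun h => hk (by simp [h])
  have hgl : g l ≠ 0 := fun h => hl (by simp [h])
  have hkl : k ≠ l := by
    rintro rfl
    exact (hfg k).elim hfk hgl
  have himage : T.symm (Pi.single i (T (Pi.single k (f k)) i + T (Pi.single l (g l)) i)) =
      Pi.single k (f k) + Pi.single l (g l) := by
    rw [Pi.single_add, ← eq_single_of_support_subsingleton (hT k (f k)) hk,
      ← eq_single_of_support_subsingleton (hT l (g l)) hl, map_add, T.symm_apply_apply,
      T.symm_apply_apply]
  have hsub := hTsymm i (T (Pi.single k (f k)) i + T (Pi.single l (g l)) i)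
  rw [himage] at hsub
  exact hkl (hsub (by simpa [hkl] using hfk) (by simpa [hkl.symm] using hgl))

end Disjointness

theorem surjective_isometry_preserves_vector_disjointness_of_euclidean_general
    {m : ℕ} {H : Type*} [NormedAddCommGroup H] [InnerProductSpace ℝ H] [FiniteDimensional ℝ H]
    (hH : 1 < Module.rank ℝ H) {N : (Fin m → ℝ) → ℝ} (hN : IsSymmLatticeNorm N)
    (hNeucl : ¬ IsEuclideanNorm N) (T : (Fin m → H) →ₗ[ℝ] (Fin m → H))
    (hT : ∀ f, mixedNorm N (T f) = mixedNorm N f)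
    {f g : Fin m → H} (hfg : ∀ i, ‖f i‖ * ‖g i‖ = 0) (i : Fin m) : ‖T f i‖ * ‖T g i‖ = 0 := by
  let S : (Fin m → H) ≃ₗ[ℝ] (Fin m → H) :=
    .ofInjectiveEndo T (hN.1.1.injective_of_mixedNorm_map hT)
  have hS (f : Fin m → H) : mixedNorm N (S f) = mixedNorm N f := hT f
  have hSsymm (f : Fin m → H) : mixedNorm N (S.symm f) = mixedNorm N f := by
    rw [← hS, S.apply_symm_apply]
  simp only [mul_eq_zero, norm_eq_zero] at hfg ⊢
  exact apply_eq_zero_or_of_support_map_single_subsingleton S.toAddEquiv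
    (hN.support_map_single_subsingleton hNeucl hH hS)
    (hN.support_map_single_subsingleton hNeucl hH hSsymm) hfg i

theorem surjective_isometry_preserves_vector_disjointness_of_euclidean
    {m d : ℕ} (hm : 3 ≤ m) (hd : 2 ≤ d) (N : (Fin m → ℝ) → ℝ)
    (hN : IsSymmLatticeNorm N)
    (hP' : ∀ t : ℝ, 0 < t →
      dualNorm N (Pi.single (⟨0, by omega⟩ : Fin m) (1 : ℝ)) <
      dualNorm N (Pi.single (⟨0, by omega⟩ : Fin m) (1 : ℝ) +
        t • (Pi.single (⟨1, by omega⟩ : Fin m) (1 : ℝ) : Fin m → ℝ)))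
    (hNp : ¬ IsLpNorm N)
    (T : (Fin m → EuclideanSpace ℝ (Fin d)) →ₗ[ℝ] (Fin m → EuclideanSpace ℝ (Fin d)))
    (hTsurj : Function.Surjective T)
    (hTiso : ∀ f : Fin m → EuclideanSpace ℝ (Fin d),
      N (fun i => ‖T f i‖) = N fun i => ‖f i‖)
    (f g : Fin m → EuclideanSpace ℝ (Fin d)) (hfg : ∀ i, ‖f i‖ * ‖g i‖ = 0) :
    ∀ i, ‖T f i‖ * ‖T g i‖ = 0 :=
  surjective_isometry_preserves_vector_disjointness_of_euclidean_general
    (Module.lt_rank_of_lt_finrank (by simpa using Nat.lt_of_succ_le hd)) hN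
    (mt IsEuclideanNorm.isLpNorm hNp) T hTiso hfg
end
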